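/- Let f : ℝ² → ℝ² be a C^∞ map with f(0)=0 which has corank one at 0, let λ be its Jacobian determinant, and let η be any null vector field for f. Then for every integer r ≥ 5, the r-jet j^r f(0) is A^r-equivalent to the r-jet at 0 of the map (x,y) ↦ (x, xy + y^r) if and only if dλ(0) ≠ 0, (η^i λ)(0) = 0 for all 1 ≤ i ≤ r−2, and (η^{r−1} λ)(0) ≠ 0. -/

import Mathlib

open Filter Topology

noncomputable section

/-- Directional derivative of a scalar function. -/
def dop (v : ℝ × ℝ) (g : ℝ × ℝ → ℝ) : ℝ × ℝ → ℝ :=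
  fun p => fderiv ℝ g p v

/-- Partial derivative operator in the first coordinate. -/
def pdx : (ℝ × ℝ → ℝ) → ℝ × ℝ → ℝ := dop (1, 0)

/-- Partial derivative operator in the second coordinate. -/
def pdy : (ℝ × ℝ → ℝ) → ℝ × ℝ → ℝ := dop (0, 1)

/-- Taylor coefficient `a_{ij} = ∂_x^i ∂_y^j g(0,0) / (i! j!)` of `g` at the origin. -/
def tcoeff (g : ℝ × ℝ → ℝ) (i j : ℕ) : ℝ :=
  (pdx^[i] (pdy^[j] g)) 0 / (Nat.factorial i * Nat.factorial j)

/-- The Jacobian determinant `λ_f` of a map `f : ℝ² → ℝ²`. -/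
def jacDet (f : ℝ × ℝ → ℝ × ℝ) (p : ℝ × ℝ) : ℝ :=
  (fderiv ℝ f p (1, 0)).1 * (fderiv ℝ f p (0, 1)).2 -
    (fderiv ℝ f p (1, 0)).2 * (fderiv ℝ f p (0, 1)).1

/-- `f` has corank one at `0` : the derivative of `f` at `0` has rank one. -/
def CorankOne (f : ℝ × ℝ → ℝ × ℝ) : Prop :=
  LinearMap.rank ((fderiv ℝ f 0).toLinearMap) = 1

/-- `η` is a null vector field for `f` near `0`. -/
def IsNullVF (f η : ℝ × ℝ → ℝ × ℝ) : Prop :=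
  η 0 ≠ 0 ∧ ∃ U ∈ 𝓝 (0 : ℝ × ℝ),
    ContDiffOn ℝ (⊤ : ℕ∞) η U ∧ ∀ p ∈ U, jacDet f p = 0 → fderiv ℝ f p (η p) = 0

/-- The derivative `(ηg)(p) = Dg(p)(η(p))` of `g` along the vector field `η`. -/
def etaD (η : ℝ × ℝ → ℝ × ℝ) (g : ℝ × ℝ → ℝ) : ℝ × ℝ → ℝ :=
  fun p => fderiv ℝ g p (η p)

/-- The iterated derivative `η^k g` along the vector field `η`. -/
def etaIter (η : ℝ × ℝ → ℝ × ℝ) : ℕ → (ℝ × ℝ → ℝ) → ℝ × ℝ → ℝ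
  | 0, g => g
  | k + 1, g => etaD η (etaIter η k g)

/-- The Hessian matrix of second partial derivatives of `g` at `0`. -/
def hess (g : ℝ × ℝ → ℝ) : Matrix (Fin 2) (Fin 2) ℝ :=
  !![pdx (pdx g) 0, pdx (pdy g) 0; pdy (pdx g) 0, pdy (pdy g) 0]

/-- `A^r`-equivalence of the `r`-jets at `0` of two map-germs `(ℝ²,0) → (ℝ²,0)`. -/
def JetEquiv (r : ℕ) (f g : ℝ × ℝ → ℝ × ℝ) : Prop :=
  ∃ φ ψ : ℝ × ℝ → ℝ × ℝ,
    ContDiff ℝ (⊤ : ℕ∞) φ ∧ ContDiff ℝ (⊤ : ℕ∞) ψ ∧ φ 0 = 0 ∧ ψ 0 = 0 ∧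
    Function.Bijective (⇑(fderiv ℝ φ 0)) ∧ Function.Bijective (⇑(fderiv ℝ ψ 0)) ∧
    ∀ i ≤ r, iteratedFDeriv ℝ i (ψ ∘ f ∘ φ) 0 = iteratedFDeriv ℝ i g 0

/-- `A`-equivalence of two map-germs `(ℝ²,0) → (ℝ²,0)`. -/
def AEquiv (f g : ℝ × ℝ → ℝ × ℝ) : Prop :=
  ∃ φ ψ : ℝ × ℝ → ℝ × ℝ,
    ContDiff ℝ (⊤ : ℕ∞) φ ∧ ContDiff ℝ (⊤ : ℕ∞) ψ ∧ φ 0 = 0 ∧ ψ 0 = 0 ∧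
    Function.Bijective (⇑(fderiv ℝ φ 0)) ∧ Function.Bijective (⇑(fderiv ℝ ψ 0)) ∧
    ∀ᶠ p in 𝓝 (0 : ℝ × ℝ), ψ (f (φ p)) = g p

/-- `f` has the form `(x, g(x,y))` where `g` is `C^∞` and the Taylor coefficients of `g`
of total degree `< N` at the origin are prescribed by `P`. -/
def HasForm (f : ℝ × ℝ → ℝ × ℝ) (g : ℝ × ℝ → ℝ) (N : ℕ) (P : ℕ → ℕ → ℝ) : Prop :=
  ContDiff ℝ (⊤ : ℕ∞) g ∧ (∀ p, f p = (p.1, g p)) ∧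
    ∀ i j, i + j < N → tcoeff g i j = P i j


/-- smooth near the origin -/
def SG {V : Type*} [NormedAddCommGroup V] [NormedSpace ℝ V] (g : ℝ × ℝ → V) : Prop :=
  ∀ᶠ p in 𝓝 (0 : ℝ × ℝ), ContDiffAt ℝ (⊤ : ℕ∞) g p

section SGlemmas
variable {V W : Type*} [NormedAddCommGroup V] [NormedSpace ℝ V]
  [NormedAddCommGroup W] [NormedSpace ℝ W]

lemma SG.of_contDiff {g : ℝ × ℝ → V} (h : ContDiff ℝ (⊤ : ℕ∞) g) : SG g :=
  Eventually.of_forall fun _ => h.contDiffAt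

lemma SG.at0 {g : ℝ × ℝ → V} (h : SG g) : ContDiffAt ℝ (⊤ : ℕ∞) g 0 := h.self_of_nhds

lemma CDA.diff {g : ℝ × ℝ → V} {p : ℝ × ℝ} (h : ContDiffAt ℝ (⊤ : ℕ∞) g p) :
    DifferentiableAt ℝ g p := h.differentiableAt (by simp)

lemma SG.diff0 {g : ℝ × ℝ → V} (h : SG g) : DifferentiableAt ℝ g 0 := CDA.diff h.at0

lemma SG.cont0 {g : ℝ × ℝ → V} (h : SG g) : ContinuousAt g 0 := h.at0.continuousAt

lemma SG.const (c : V) : SG (fun _ : ℝ × ℝ => c) := SG.of_contDiff contDiff_const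

lemma SG.add {g h : ℝ × ℝ → V} (hg : SG g) (hh : SG h) : SG (fun p => g p + h p) := by
  filter_upwards [hg, hh] with p a b using a.add b

lemma SG.sub {g h : ℝ × ℝ → V} (hg : SG g) (hh : SG h) : SG (fun p => g p - h p) := by
  filter_upwards [hg, hh] with p a b using a.sub b

lemma SG.neg {g : ℝ × ℝ → V} (hg : SG g) : SG (fun p => - g p) := by
  filter_upwards [hg] with p a using a.neg

lemma SG.mul {g h : ℝ × ℝ → ℝ} (hg : SG g) (hh : SG h) : SG (fun p => g p * h p) := by
  filter_upwards [hg, hh] with p a b using a.mul b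

lemma SG.pow {g : ℝ × ℝ → ℝ} (hg : SG g) (n : ℕ) : SG (fun p => g p ^ n) := by
  filter_upwards [hg] with p a using a.pow n

lemma SG.div {g h : ℝ × ℝ → ℝ} (hg : SG g) (hh : SG h) (h0 : h 0 ≠ 0) :
    SG (fun p => g p / h p) := by
  filter_upwards [hg, hh, hh.cont0.eventually_ne h0] with p a b c using a.div b c

lemma SG.prodMk {g : ℝ × ℝ → V} {h : ℝ × ℝ → W} (hg : SG g) (hh : SG h) :
    SG (fun p => (g p, h p)) := by
  filter_upwards [hg, hh] with p a b using a.prodMk b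

lemma SG.fst {g : ℝ × ℝ → V × W} (hg : SG g) : SG (fun p => (g p).1) := by
  filter_upwards [hg] with p a using a.fst

lemma SG.snd {g : ℝ × ℝ → V × W} (hg : SG g) : SG (fun p => (g p).2) := by
  filter_upwards [hg] with p a using a.snd

lemma SG.congr {g h : ℝ × ℝ → V} (hg : SG g) (e : g =ᶠ[𝓝 0] h) : SG h := by
  filter_upwards [hg, e.eventuallyEq_nhds] with p a b using a.congr_of_eventuallyEq b.symm

lemma SG.comp {g : ℝ × ℝ → V} {φ : ℝ × ℝ → ℝ × ℝ} (hg : SG g) (hφ : SG φ) (h0 : φ 0 = 0) :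
    SG (fun p => g (φ p)) := by
  have : Tendsto φ (𝓝 0) (𝓝 0) := by simpa [ContinuousAt, h0] using hφ.cont0
  filter_upwards [this.eventually hg, hφ] with p a b using ContDiffAt.comp p a b

lemma SG.fderiv_apply {g : ℝ × ℝ → V} {v : ℝ × ℝ → ℝ × ℝ} (hg : SG g) (hv : SG v) :
    SG (fun p => fderiv ℝ g p (v p)) := by
  filter_upwards [hg, hv] with p a b
  exact (a.fderiv_right (m := (⊤ : ℕ∞)) (by norm_cast)).clm_apply b

end SGlemmas

lemma SG.etaD {g : ℝ × ℝ → ℝ} {v : ℝ × ℝ → ℝ × ℝ} (hg : SG g) (hv : SG v) : SG (etaD v g) :=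
  hg.fderiv_apply hv

lemma SG.pdx {g : ℝ × ℝ → ℝ} (hg : SG g) : SG (pdx g) := hg.fderiv_apply (SG.const _)
lemma SG.pdy {g : ℝ × ℝ → ℝ} (hg : SG g) : SG (pdy g) := hg.fderiv_apply (SG.const _)

lemma SG.etaIter {g : ℝ × ℝ → ℝ} {v : ℝ × ℝ → ℝ × ℝ} (hg : SG g) (hv : SG v) (k : ℕ) :
    SG (etaIter v k g) := by
  induction k with
  | zero => exact hg
  | succ k ih => exact ih.etaD hv

lemma SG.x : SG (fun p : ℝ × ℝ => p.1) := SG.of_contDiff contDiff_fst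
lemma SG.y : SG (fun p : ℝ × ℝ => p.2) := SG.of_contDiff contDiff_snd

/-! derivative rules for `etaD` -/

lemma etaD_congr (v : ℝ × ℝ → ℝ × ℝ) {g h : ℝ × ℝ → ℝ} (e : g =ᶠ[𝓝 0] h) :
    etaD v g =ᶠ[𝓝 0] etaD v h := by
  filter_upwards [e.eventuallyEq_nhds] with p a
  simp only [etaD]; rw [a.fderiv_eq]

lemma etaD_add (v : ℝ × ℝ → ℝ × ℝ) {g h : ℝ × ℝ → ℝ} (hg : SG g) (hh : SG h) :
    etaD v (fun p => g p + h p) =ᶠ[𝓝 0] fun p => etaD v g p + etaD v h p := by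
  filter_upwards [hg, hh] with p a b
  simp only [etaD]; rw [fderiv_fun_add (CDA.diff a) (CDA.diff b)]; rfl

lemma etaD_sub (v : ℝ × ℝ → ℝ × ℝ) {g h : ℝ × ℝ → ℝ} (hg : SG g) (hh : SG h) :
    etaD v (fun p => g p - h p) =ᶠ[𝓝 0] fun p => etaD v g p - etaD v h p := by
  filter_upwards [hg, hh] with p a b
  simp only [etaD]; rw [fderiv_fun_sub (CDA.diff a) (CDA.diff b)]; rfl

lemma etaD_mul (v : ℝ × ℝ → ℝ × ℝ) {g h : ℝ × ℝ → ℝ} (hg : SG g) (hh : SG h) :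
    etaD v (fun p => g p * h p) =ᶠ[𝓝 0] fun p => etaD v g p * h p + g p * etaD v h p := by
  filter_upwards [hg, hh] with p a b
  simp only [etaD]; rw [fderiv_fun_mul (CDA.diff a) (CDA.diff b)]
  simp; ring

lemma etaD_const (v : ℝ × ℝ → ℝ × ℝ) (c : ℝ) : etaD v (fun _ => c) = fun _ => 0 := by
  funext p; simp [etaD]

lemma clm_decomp {V : Type*} [NormedAddCommGroup V] [NormedSpace ℝ V]
    (L : ℝ × ℝ →L[ℝ] V) (v : ℝ × ℝ) : L v = v.1 • L (1, 0) + v.2 • L (0, 1) := by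
  rw [← map_smul, ← map_smul, ← map_add]; simp

lemma etaD_eq (v : ℝ × ℝ → ℝ × ℝ) (g : ℝ × ℝ → ℝ) :
    etaD v g = fun p => (v p).1 * pdx g p + (v p).2 * pdy g p := by
  funext p; simp only [etaD]; rw [clm_decomp]; rfl

lemma pdx_etaD (g : ℝ × ℝ → ℝ) : pdx g = etaD (fun _ => (1, 0)) g := rfl
lemma pdy_etaD (g : ℝ × ℝ → ℝ) : pdy g = etaD (fun _ => (0, 1)) g := rfl

lemma etaD_poly (v : ℝ × ℝ → ℝ × ℝ) {g : ℝ × ℝ → ℝ} (hg : SG g) (P : Polynomial ℝ) :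
    etaD v (fun p => P.eval (g p)) =ᶠ[𝓝 0] fun p => P.derivative.eval (g p) * etaD v g p := by
  filter_upwards [hg] with p a
  simp only [etaD]
  have := (P.hasDerivAt (g p)).comp_hasFDerivAt p (CDA.diff a).hasFDerivAt
  have h2 : fderiv ℝ (fun p => P.eval (g p)) p = _ := this.fderiv
  rw [h2]; simp

lemma SG.poly {g : ℝ × ℝ → ℝ} (hg : SG g) (P : Polynomial ℝ) : SG (fun p => P.eval (g p)) := by
  filter_upwards [hg] with p a
  have : ContDiff ℝ (⊤ : ℕ∞) (fun x : ℝ => P.eval x) := by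
    simpa using P.contDiff_aeval (𝕜 := ℝ) (⊤ : ℕ∞)
  exact this.contDiffAt.comp p a

/-! flatness -/

/-- all Taylor coefficients of order `< N` vanish -/
def Fl : ℕ → (ℝ × ℝ → ℝ) → Prop
  | 0, g => SG g
  | N + 1, g => SG g ∧ g 0 = 0 ∧ Fl N (pdx g) ∧ Fl N (pdy g)

lemma Fl.sg {N : ℕ} {g : ℝ × ℝ → ℝ} (h : Fl N g) : SG g := by
  cases N with
  | zero => exact h
  | succ N => exact h.1

lemma Fl.congr {N : ℕ} : ∀ {g h : ℝ × ℝ → ℝ}, Fl N g → g =ᶠ[𝓝 0] h → Fl N h := by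
  induction N with
  | zero => intro g h hg e; exact SG.congr hg e
  | succ N ih =>
    intro g h hg e
    exact ⟨hg.1.congr e, by rw [← e.self_of_nhds]; exact hg.2.1,
      ih hg.2.2.1 (etaD_congr _ e), ih hg.2.2.2 (etaD_congr _ e)⟩

lemma Fl.pred {N : ℕ} : ∀ {g : ℝ × ℝ → ℝ}, Fl (N + 1) g → Fl N g := by
  induction N with
  | zero => intro g h; exact h.1
  | succ N ih => intro g h; exact ⟨h.1, h.2.1, ih h.2.2.1, ih h.2.2.2⟩

lemma Fl.mono {N M : ℕ} {g : ℝ × ℝ → ℝ} (h : Fl N g) (hM : M ≤ N) : Fl M g := by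
  induction N, hM using Nat.le_induction with
  | base => exact h
  | succ N _ ih => exact ih h.pred

lemma Fl.add {N : ℕ} : ∀ {g h : ℝ × ℝ → ℝ}, Fl N g → Fl N h → Fl N (fun p => g p + h p) := by
  induction N with
  | zero => intro g h hg hh; exact SG.add hg hh
  | succ N ih =>
    intro g h hg hh
    exact ⟨hg.1.add hh.1, by simp [hg.2.1, hh.2.1],
      (ih hg.2.2.1 hh.2.2.1).congr (etaD_add _ hg.1 hh.1).symm,
      (ih hg.2.2.2 hh.2.2.2).congr (etaD_add _ hg.1 hh.1).symm⟩

lemma Fl.sub {N : ℕ} : ∀ {g h : ℝ × ℝ → ℝ}, Fl N g → Fl N h → Fl N (fun p => g p - h p) := by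
  induction N with
  | zero => intro g h hg hh; exact SG.sub hg hh
  | succ N ih =>
    intro g h hg hh
    exact ⟨hg.1.sub hh.1, by simp [hg.2.1, hh.2.1],
      (ih hg.2.2.1 hh.2.2.1).congr (etaD_sub _ hg.1 hh.1).symm,
      (ih hg.2.2.2 hh.2.2.2).congr (etaD_sub _ hg.1 hh.1).symm⟩

lemma Fl.zero (N : ℕ) : Fl N (fun _ => 0) := by
  induction N with
  | zero => exact SG.const _
  | succ N ih =>
    exact ⟨SG.const _, rfl, by rw [pdx_etaD, etaD_const]; exact ih,
      by rw [pdy_etaD, etaD_const]; exact ih⟩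

lemma Fl.mul_aux (n : ℕ) : ∀ (N M : ℕ) (g h : ℝ × ℝ → ℝ), N + M = n → Fl N g → Fl M h →
    Fl n (fun p => g p * h p) := by
  induction n with
  | zero => intro N M g h _ hg hh; exact hg.sg.mul hh.sg
  | succ n ih =>
    intro N M g h e hg hh
    have key : ∀ v, (∀ K q, Fl (K + 1) q → Fl K (etaD v q)) → (∀ q, SG q → SG (etaD v q)) →
        Fl n (etaD v (fun p => g p * h p)) := by
      intro v hv hv0
      refine Fl.congr ?_ (etaD_mul v hg.sg hh.sg).symm
      refine Fl.add ?_ ?_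
      · cases N with
        | zero =>
          obtain rfl : M = n + 1 := by omega
          exact ih 0 n _ _ (by omega) (hv0 _ hg) hh.pred
        | succ N => exact ih N M _ _ (by omega) (hv _ _ hg) hh
      · cases M with
        | zero =>
          obtain rfl : N = n + 1 := by omega
          exact ih n 0 _ _ (by omega) hg.pred (hv0 _ hh)
        | succ M => exact ih N M _ _ (by omega) hg (hv _ _ hh)
    refine ⟨hg.sg.mul hh.sg, ?_, key _ (fun K q hq => hq.2.2.1) (fun q => SG.pdx),
      key _ (fun K q hq => hq.2.2.2) (fun q => SG.pdy)⟩
    cases N with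
    | zero => cases M with
      | zero => omega
      | succ M => simp [hh.2.1]
    | succ N => simp [hg.2.1]

lemma Fl.mul {N M : ℕ} {g h : ℝ × ℝ → ℝ} (hg : Fl N g) (hh : Fl M h) :
    Fl (N + M) (fun p => g p * h p) := Fl.mul_aux _ N M g h rfl hg hh

lemma Fl.mul_left {N : ℕ} {g h : ℝ × ℝ → ℝ} (hg : SG g) (hh : Fl N h) :
    Fl N (fun p => g p * h p) := Fl.mul_aux _ 0 N g h (by omega) hg hh

lemma Fl.mul_right {N : ℕ} {g h : ℝ × ℝ → ℝ} (hg : Fl N g) (hh : SG h) :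
    Fl N (fun p => g p * h p) := Fl.mul_aux _ N 0 g h (by omega) hg hh

lemma Fl.one {g : ℝ × ℝ → ℝ} (hg : SG g) (h0 : g 0 = 0) : Fl 1 g :=
  ⟨hg, h0, hg.pdx, hg.pdy⟩

lemma Fl.pow {g : ℝ × ℝ → ℝ} (hg : Fl 1 g) (n : ℕ) : Fl n (fun p => g p ^ n) := by
  induction n with
  | zero => simpa [Fl] using SG.const (1 : ℝ)
  | succ n ih => simpa [pow_succ] using ih.mul hg

lemma Fl.etaD {N : ℕ} {g : ℝ × ℝ → ℝ} {v : ℝ × ℝ → ℝ × ℝ} (hg : Fl (N + 1) g) (hv : SG v) :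
    Fl N (etaD v g) := by
  rw [etaD_eq]
  exact (Fl.mul_left hv.fst hg.2.2.1).add (Fl.mul_left hv.snd hg.2.2.2)

lemma Fl.at0 {N : ℕ} {g : ℝ × ℝ → ℝ} (hg : Fl (N + 1) g) : g 0 = 0 := hg.2.1

lemma Fl.comp {N : ℕ} {φ : ℝ × ℝ → ℝ × ℝ} (hφ : SG φ) (h0 : φ 0 = 0) :
    ∀ {g : ℝ × ℝ → ℝ}, Fl N g → Fl N (fun p => g (φ p)) := by
  have hT : Tendsto φ (𝓝 0) (𝓝 0) := by simpa [ContinuousAt, h0] using hφ.cont0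
  induction N with
  | zero => intro g hg; exact SG.comp hg hφ h0
  | succ N ih =>
    intro g hg
    have key : ∀ w : ℝ × ℝ, Fl N (dop w (fun p => g (φ p))) := by
      intro w
      have hw : SG (fun p => fderiv ℝ φ p w) := hφ.fderiv_apply (SG.const _)
      refine Fl.congr ((Fl.mul_left hw.fst (ih hg.2.2.1)).add
        (Fl.mul_left hw.snd (ih hg.2.2.2))) ?_
      filter_upwards [hT.eventually hg.1, hφ] with p a b
      have : fderiv ℝ (fun p => g (φ p)) p = _ := fderiv_comp p (CDA.diff a) (CDA.diff b)
      simp only [dop, this, ContinuousLinearMap.comp_apply]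
      rw [clm_decomp (fderiv ℝ g (φ p))]; rfl
    exact ⟨hg.1.comp hφ h0, by simp [h0, hg.2.1], key _, key _⟩

/-- bridge with `iteratedFDeriv` -/
lemma Fl_iff {N : ℕ} : ∀ {g : ℝ × ℝ → ℝ}, ContDiff ℝ (⊤ : ℕ∞) g →
    (Fl N g ↔ ∀ i < N, iteratedFDeriv ℝ i g 0 = 0) := by
  induction N with
  | zero => intro g hg; simp [Fl, SG.of_contDiff hg]
  | succ N ih =>
    intro g hg
    have hd : ContDiff ℝ (⊤ : ℕ∞) (fderiv ℝ g) := hg.fderiv_right (by norm_cast)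
    have hdw : ∀ w, ContDiff ℝ (⊤ : ℕ∞) (dop w g) := fun w => hd.clm_apply contDiff_const
    have hdx : ContDiff ℝ (⊤ : ℕ∞) (pdx g) := hdw _
    have hdy : ContDiff ℝ (⊤ : ℕ∞) (pdy g) := hdw _
    have h1 : ∀ i, iteratedFDeriv ℝ (i + 1) g 0 = 0 ↔ iteratedFDeriv ℝ i (fderiv ℝ g) 0 = 0 := by
      intro i
      rw [← norm_eq_zero, ← norm_iteratedFDeriv_fderiv, norm_eq_zero]
    have h2 : ∀ i, iteratedFDeriv ℝ i (fderiv ℝ g) 0 = 0 ↔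
        iteratedFDeriv ℝ i (pdx g) 0 = 0 ∧ iteratedFDeriv ℝ i (pdy g) 0 = 0 := by
      intro i
      constructor
      · intro h
        have : ∀ w, iteratedFDeriv ℝ i (dop w g) 0 = 0 := by
          intro w
          have := (ContinuousLinearMap.apply ℝ ℝ w).iteratedFDeriv_comp_left
            (hd.contDiffAt (x := 0)) (i := i) (by exact_mod_cast le_top)
          rw [h] at this
          have e : dop w g = (ContinuousLinearMap.apply ℝ ℝ w) ∘ fderiv ℝ g := rfl
          rw [e, this]; ext; simp
        exact ⟨this _, this _⟩
      · rintro ⟨hx, hy⟩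
        have e : fderiv ℝ g =
            (((ContinuousLinearMap.toSpanSingleton ℝ (ContinuousLinearMap.fst ℝ ℝ ℝ)) ∘ pdx g) +
            ((ContinuousLinearMap.toSpanSingleton ℝ (ContinuousLinearMap.snd ℝ ℝ ℝ)) ∘ pdy g)) := by
          funext p; ext <;> simp [pdx, pdy, dop]
        rw [e, iteratedFDeriv_add_apply, ContinuousLinearMap.iteratedFDeriv_comp_left _
            hdx.contDiffAt (by exact_mod_cast le_top),
            ContinuousLinearMap.iteratedFDeriv_comp_left _
            hdy.contDiffAt (by exact_mod_cast le_top)]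
        · rw [hx, hy]; ext <;> simp
        · exact ((ContinuousLinearMap.contDiff _).comp hdx).contDiffAt.of_le
            (by exact_mod_cast le_top)
        · exact ((ContinuousLinearMap.contDiff _).comp hdy).contDiffAt.of_le
            (by exact_mod_cast le_top)
    simp only [Fl]
    rw [ih hdx, ih hdy]
    constructor
    · rintro ⟨_, h0, hx, hy⟩ i hi
      cases i with
      | zero => ext; simp [h0]
      | succ i => exact (h1 i).2 ((h2 i).2 ⟨hx i (by omega), hy i (by omega)⟩)
    · intro h
      refine ⟨SG.of_contDiff hg, ?_, fun i hi => ((h2 i).1 ((h1 i).1 (h _ (by omega)))).1,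
        fun i hi => ((h2 i).1 ((h1 i).1 (h _ (by omega)))).2⟩
      have := h 0 (by omega)
      have h3 := congrArg (fun m => m (fun _ => 0)) this
      simpa using h3

lemma jet_iff {r : ℕ} {F G : ℝ × ℝ → ℝ × ℝ} (hF : ContDiff ℝ (⊤ : ℕ∞) F)
    (hG : ContDiff ℝ (⊤ : ℕ∞) G) :
    (∀ i ≤ r, iteratedFDeriv ℝ i F 0 = iteratedFDeriv ℝ i G 0) ↔
      Fl (r + 1) (fun p => (F p).1 - (G p).1) ∧ Fl (r + 1) (fun p => (F p).2 - (G p).2) := by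
  have h1 : ContDiff ℝ (⊤ : ℕ∞) (fun p => (F p).1 - (G p).1) := hF.fst.sub hG.fst
  have h2 : ContDiff ℝ (⊤ : ℕ∞) (fun p => (F p).2 - (G p).2) := hF.snd.sub hG.snd
  have hs : ContDiff ℝ (⊤ : ℕ∞) (F - G) := hF.sub hG
  rw [Fl_iff h1, Fl_iff h2, ← forall₂_and]
  refine forall_congr' fun i => ?_
  rw [Nat.lt_succ_iff]
  refine imp_congr_right fun _ => ?_
  have hsub : iteratedFDeriv ℝ i (F - G) 0 = iteratedFDeriv ℝ i F 0 - iteratedFDeriv ℝ i G 0 :=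
    iteratedFDeriv_sub_apply (hF.contDiffAt.of_le (by exact_mod_cast le_top))
      (hG.contDiffAt.of_le (by exact_mod_cast le_top))
  rw [← sub_eq_zero, ← hsub]
  have e1 : (fun p => (F p).1 - (G p).1) = (ContinuousLinearMap.fst ℝ ℝ ℝ) ∘ (F - G) := rfl
  have e2 : (fun p => (F p).2 - (G p).2) = (ContinuousLinearMap.snd ℝ ℝ ℝ) ∘ (F - G) := rfl
  rw [e1, e2, ContinuousLinearMap.iteratedFDeriv_comp_left _
    hs.contDiffAt (by exact_mod_cast le_top), ContinuousLinearMap.iteratedFDeriv_comp_left _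
    hs.contDiffAt (by exact_mod_cast le_top)]
  constructor
  · intro h; rw [h]; constructor <;> (ext; simp)
  · rintro ⟨a, b⟩
    ext m
    · simpa using congrArg (fun q => q m) a
    · simpa using congrArg (fun q => q m) b


/-- smooth division-free substitute for Hadamard: functions vanishing on `{μ = 0}` have
differential proportional to that of `μ`, with a smooth factor. -/
lemma lagr {μ D : ℝ × ℝ → ℝ} (hμ : SG μ) (hD : SG D) (hd : fderiv ℝ μ 0 ≠ 0)
    (hv : ∀ᶠ p in 𝓝 (0 : ℝ × ℝ), μ p = 0 → D p = 0) :
    ∃ c : ℝ × ℝ → ℝ, SG c ∧ ∀ᶠ p in 𝓝 (0 : ℝ × ℝ), μ p = 0 →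
      fderiv ℝ D p = c p • fderiv ℝ μ p := by
  obtain ⟨v, hv0⟩ : ∃ v, fderiv ℝ μ 0 v ≠ 0 := by
    by_contra hcon
    push Not at hcon
    exact hd (ContinuousLinearMap.ext hcon)
  have h1 : SG (fun p => fderiv ℝ μ p v) := hμ.fderiv_apply (SG.const v)
  have h2 : SG (fun p => fderiv ℝ D p v) := hD.fderiv_apply (SG.const v)
  refine ⟨_, h2.div h1 hv0, ?_⟩
  filter_upwards [hμ, hD, h1.cont0.eventually_ne hv0, hv, hv.eventually_nhds] with p a b c hp d m
  have hext : IsLocalExtrOn D {x | μ x = μ p} p := by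
    left
    have : ∀ᶠ q in 𝓝[{x | μ x = μ p}] p, D p ≤ D q := by
      filter_upwards [nhdsWithin_le_nhds d, self_mem_nhdsWithin] with q hq hq2
      rw [hp m, hq (by rw [hq2, m])]
    exact this
  obtain ⟨α, β, hab, e⟩ := hext.exists_multipliers_of_hasStrictFDerivAt_1d
    (a.hasStrictFDerivAt (by simp)) (b.hasStrictFDerivAt (by simp))
  have hw : ∀ w, α * fderiv ℝ μ p w + β * fderiv ℝ D p w = 0 := by
    intro w
    simpa using congrArg (fun L => L w) e
  have hβ : β ≠ 0 := by
    rintro rfl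
    have := hw v
    simp only [zero_mul, add_zero, mul_eq_zero, c, or_false] at this
    exact hab (by simp [this])
  refine ContinuousLinearMap.ext fun w => ?_
  change _ = fderiv ℝ D p v / fderiv ℝ μ p v * fderiv ℝ μ p w
  have e1 := hw v
  have e2 := hw w
  field_simp
  have : β * (fderiv ℝ D p w * fderiv ℝ μ p v) = β * (fderiv ℝ D p v * fderiv ℝ μ p w) := by
    linear_combination (fderiv ℝ μ p v) * e2 - (fderiv ℝ μ p w) * e1
  exact mul_left_cancel₀ hβ this

lemma SG.sum {n : ℕ} {a : ℕ → ℝ × ℝ → ℝ} (h : ∀ i, SG (a i)) :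
    SG (fun p => ∑ i ∈ Finset.range n, a i p) := by
  induction n with
  | zero => simpa using SG.const (0 : ℝ)
  | succ n ih => simpa only [Finset.sum_range_succ] using ih.add (h n)

lemma etaD_sum (v : ℝ × ℝ → ℝ × ℝ) {n : ℕ} {a : ℕ → ℝ × ℝ → ℝ} (h : ∀ i, SG (a i)) :
    etaD v (fun p => ∑ i ∈ Finset.range n, a i p) =ᶠ[𝓝 0]
      fun p => ∑ i ∈ Finset.range n, etaD v (a i) p := by
  induction n with
  | zero => simp [etaD_const]
  | succ n ih =>
    simp only [Finset.sum_range_succ]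
    refine (etaD_add v (SG.sum h) (h n)).trans ?_
    filter_upwards [ih] with p hp
    rw [hp]

lemma abstract_step {μ : ℝ × ℝ → ℝ} {ξ ζ : ℝ × ℝ → ℝ × ℝ} {d h u : ℝ × ℝ → ℝ}
    {m : ℕ → ℝ × ℝ → ℝ} (hμ : SG μ) (hξ : SG ξ) (hd : SG d) (hh : SG h) (hu : SG u)
    (hm : ∀ i, SG (m i)) (d0 : d 0 ≠ 0) (h0 : h 0 ≠ 0) (u0 : u 0 ≠ 0)
    (hdμ : fderiv ℝ μ 0 ≠ 0)
    (m0 : m 0 =ᶠ[𝓝 0] fun p => u p * μ p)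
    (hζ : ∀ i, etaD ζ (m i) =ᶠ[𝓝 0] fun p => d p * m (i + 1) p)
    (hζξ : ∀ᶠ p in 𝓝 (0 : ℝ × ℝ), μ p = 0 → ζ p = h p • ξ p) (k : ℕ) :
    ∃ a : ℕ → ℝ × ℝ → ℝ, (∀ i, SG (a i)) ∧ a k 0 ≠ 0 ∧
      ∀ᶠ p in 𝓝 (0 : ℝ × ℝ), μ p = 0 →
        m (k + 1) p = ∑ i ∈ Finset.range (k + 1), a i p * etaIter ξ (i + 1) μ p := by
  induction k with
  | zero =>
    refine ⟨fun _ p => h p * u p / d p, fun _ => (hh.mul hu).div hd d0, by simp [d0, h0, u0], ?_⟩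
    filter_upwards [hζ 0, hζξ, etaD_congr ζ m0, etaD_mul ζ hu hμ, hd.cont0.eventually_ne d0]
      with p e1 e2 e3 e4 e5 hp
    rw [e3, e4, hp] at e1
    simp only [etaD, e2 hp, map_smul, smul_eq_mul] at e1
    simp only [zero_add, Finset.range_one, Finset.sum_singleton, etaIter, etaD]
    field_simp
    linear_combination -e1
  | succ k ih =>
    obtain ⟨a, ha, hak, hE⟩ := ih
    have hM : ∀ i, SG (etaIter ξ (i + 1) μ) := fun i => hμ.etaIter hξ _
    set S : ℝ × ℝ → ℝ := fun p => ∑ i ∈ Finset.range (k + 1), a i p * etaIter ξ (i + 1) μ p with hS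
    have hSs : SG S := SG.sum fun i => (ha i).mul (hM i)
    obtain ⟨c, hc, hcE⟩ := lagr hμ ((hm (k + 1)).sub hSs) hdμ (by
      filter_upwards [hE] with p hp hp0
      rw [hp hp0, sub_self])
    let b : ℕ → ℝ × ℝ → ℝ := fun j p => h p / d p * ((if j ≤ k then etaD ξ (a j) p else 0) +
      (match j with | 0 => c p | i + 1 => a i p))
    have hhd := hh.div hd d0
    refine ⟨b, ?_, ?_, ?_⟩
    · intro j
      refine hhd.mul (SG.add ?_ ?_)
      · by_cases hj : j ≤ k
        · simpa only [hj, if_true] using (ha j).etaD hξ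
        · simpa only [hj, if_false] using SG.const (0 : ℝ)
      · cases j with
        | zero => exact hc
        | succ j => exact ha j
    · simp [b, d0, h0, hak]
    · have hmul : ∀ᶠ p in 𝓝 (0 : ℝ × ℝ), etaD ξ S p = ∑ i ∈ Finset.range (k + 1),
          (etaD ξ (a i) p * etaIter ξ (i + 1) μ p + a i p * etaIter ξ (i + 1 + 1) μ p) := by
        have : ∀ᶠ p in 𝓝 (0 : ℝ × ℝ), ∀ i ∈ Finset.range (k + 1), etaD ξ (fun p => a i p * etaIter ξ (i + 1) μ p) p
          = (etaD ξ (a i) p * etaIter ξ (i + 1) μ p + a i p * etaIter ξ (i + 1 + 1) μ p) := by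
          rw [Filter.eventually_all_finset]
          intro i _
          exact etaD_mul ξ (ha i) (hM i)
        filter_upwards [etaD_sum ξ (n := k + 1) (fun i => (ha i).mul (hM i)), this] with p e1 e2
        rw [e1]
        exact Finset.sum_congr rfl e2
      filter_upwards [hζ (k + 1), hζξ, hmul, hcE, hd.cont0.eventually_ne d0, hm (k + 1), hSs]
        with p e1 e2 e3 e4 e5 e6 e7 hp
      have e8 : fderiv ℝ (m (k + 1)) p = fderiv ℝ S p + c p • fderiv ℝ μ p := by
        rw [← e4 hp, fderiv_fun_sub (CDA.diff e6) (CDA.diff e7)]; abel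
      have e9 : d p * m (k + 1 + 1) p = h p * (etaD ξ S p + c p * etaIter ξ 1 μ p) := by
        rw [← e1]
        simp only [etaD, etaIter, e2 hp, e8]
        simp
      have e10 : m (k + 1 + 1) p = h p / d p * (etaD ξ S p + c p * etaIter ξ 1 μ p) := by
        field_simp; linear_combination e9
      rw [e10, e3]
      simp only [b, mul_assoc]
      rw [← Finset.mul_sum]
      congr 1
      simp only [add_mul]
      rw [Finset.sum_add_distrib, Finset.sum_add_distrib, Finset.sum_range_succ (n := k + 1),
        Finset.sum_range_succ' (n := k + 1)]
      have : ∑ i ∈ Finset.range (k + 1), (if i ≤ k then etaD ξ (a i) p else 0) *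
          etaIter ξ (i + 1) μ p = ∑ i ∈ Finset.range (k + 1), etaD ξ (a i) p *
          etaIter ξ (i + 1) μ p := by
        refine Finset.sum_congr rfl fun i hi => ?_
        rw [if_pos (by simpa [Nat.lt_succ_iff] using hi)]
      rw [this]
      simp
      ring

lemma abstract_iff {μ : ℝ × ℝ → ℝ} {ξ ζ : ℝ × ℝ → ℝ × ℝ} {d h u : ℝ × ℝ → ℝ}
    {m : ℕ → ℝ × ℝ → ℝ} (hμ : SG μ) (hξ : SG ξ) (hd : SG d) (hh : SG h) (hu : SG u)
    (hm : ∀ i, SG (m i)) (d0 : d 0 ≠ 0) (h0 : h 0 ≠ 0) (u0 : u 0 ≠ 0) (hμ0 : μ 0 = 0)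
    (hdμ : fderiv ℝ μ 0 ≠ 0)
    (m0 : m 0 =ᶠ[𝓝 0] fun p => u p * μ p)
    (hζ : ∀ i, etaD ζ (m i) =ᶠ[𝓝 0] fun p => d p * m (i + 1) p)
    (hζξ : ∀ᶠ p in 𝓝 (0 : ℝ × ℝ), μ p = 0 → ζ p = h p • ξ p) (n : ℕ) :
    (∀ i < n, m (i + 1) 0 = 0) ↔ ∀ i < n, etaIter ξ (i + 1) μ 0 = 0 := by
  induction n with
  | zero => simp
  | succ n ih =>
    obtain ⟨a, ha, han, hE⟩ := abstract_step hμ hξ hd hh hu hm d0 h0 u0 hdμ m0 hζ hζξ n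
    have e := hE.self_of_nhds hμ0
    rw [Finset.sum_range_succ] at e
    have key : (∀ i < n, etaIter ξ (i + 1) μ 0 = 0) →
        (m (n + 1) 0 = 0 ↔ etaIter ξ (n + 1) μ 0 = 0) := by
      intro h
      rw [e, Finset.sum_eq_zero (fun i hi => by rw [h i (Finset.mem_range.1 hi), mul_zero]),
        zero_add, mul_eq_zero]
      simp [han]
    constructor
    · intro h
      have h1 := ih.1 fun i hi => h i (by omega)
      intro i hi
      rcases Nat.lt_succ_iff_lt_or_eq.1 hi with hi | rfl
      · exact h1 i hi
      · exact (key h1).1 (h _ hi)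
    · intro h
      have h1 : ∀ i < n, etaIter ξ (i + 1) μ 0 = 0 := fun i hi => h i (by omega)
      intro i hi
      rcases Nat.lt_succ_iff_lt_or_eq.1 hi with hi' | rfl
      · exact ih.2 h1 i hi'
      · exact (key h1).2 (h _ hi)


lemma jacDet_comp {g h : ℝ × ℝ → ℝ × ℝ} {p : ℝ × ℝ} (hg : DifferentiableAt ℝ g (h p))
    (hh : DifferentiableAt ℝ h p) :
    jacDet (fun q => g (h q)) p = jacDet g (h p) * jacDet h p := by
  have e : fderiv ℝ (fun q => g (h q)) p = (fderiv ℝ g (h p)).comp (fderiv ℝ h p) :=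
    fderiv_comp p hg hh
  simp only [jacDet, e, ContinuousLinearMap.comp_apply]
  rw [clm_decomp (fderiv ℝ g (h p)) (fderiv ℝ h p (1, 0)),
    clm_decomp (fderiv ℝ g (h p)) (fderiv ℝ h p (0, 1))]
  simp only [Prod.fst_add, Prod.snd_add, Prod.smul_fst, Prod.smul_snd, smul_eq_mul]
  ring

lemma jacDet_ne_of_inj {g : ℝ × ℝ → ℝ × ℝ} {p : ℝ × ℝ}
    (h : Function.Injective (fderiv ℝ g p)) : jacDet g p ≠ 0 := by
  intro h0
  simp only [jacDet] at h0
  have inj : ∀ v, fderiv ℝ g p v = 0 → v = 0 := fun v hv => h (by rw [hv, map_zero])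
  have e1 := inj ((fderiv ℝ g p (0, 1)).1, -(fderiv ℝ g p (1, 0)).1) (by
    rw [clm_decomp]
    ext <;> simp
    · ring
    · linear_combination -h0)
  have e2 := inj ((fderiv ℝ g p (0, 1)).2, -(fderiv ℝ g p (1, 0)).2) (by
    rw [clm_decomp]
    ext <;> simp
    · linear_combination h0
    · ring)
  simp only [Prod.mk_eq_zero, neg_eq_zero] at e1 e2
  have := inj (1, 0) (Prod.ext e1.2 e2.2)
  simp at this

lemma bij_of_jacDet_ne {g : ℝ × ℝ → ℝ × ℝ} {p : ℝ × ℝ} (h : jacDet g p ≠ 0) :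
    Function.Bijective (fderiv ℝ g p) := by
  have inj : Function.Injective (fderiv ℝ g p) := by
    rw [injective_iff_map_eq_zero]
    intro v hv
    rw [clm_decomp] at hv
    have h1 := congrArg Prod.fst hv
    have h2 := congrArg Prod.snd hv
    simp only [Prod.fst_add, Prod.snd_add, Prod.smul_fst, Prod.smul_snd, smul_eq_mul,
      Prod.fst_zero, Prod.snd_zero] at h1 h2
    simp only [jacDet] at h
    ext
    · refine (mul_eq_zero.1 (?_ : jacDet g p * v.1 = 0)).resolve_left h
      simp only [jacDet]
      linear_combination (fderiv ℝ g p (0, 1)).2 * h1 - (fderiv ℝ g p (0, 1)).1 * h2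
    · refine (mul_eq_zero.1 (?_ : jacDet g p * v.2 = 0)).resolve_left h
      simp only [jacDet]
      linear_combination (fderiv ℝ g p (1, 0)).1 * h2 - (fderiv ℝ g p (1, 0)).2 * h1
  exact ⟨inj, (LinearMap.injective_iff_surjective
    (f := (fderiv ℝ g p).toLinearMap)).1 inj⟩

lemma SG.jacDet {g : ℝ × ℝ → ℝ × ℝ} (hg : SG g) : SG (jacDet g) := by
  have h1 : SG (fun p => fderiv ℝ g p (1, 0)) := hg.fderiv_apply (SG.const _)
  have h2 : SG (fun p => fderiv ℝ g p (0, 1)) := hg.fderiv_apply (SG.const _)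
  exact (h1.fst.mul h2.snd).sub (h1.snd.mul h2.fst)

lemma fderiv_fst' {F : ℝ × ℝ → ℝ × ℝ} {p : ℝ × ℝ} (h : DifferentiableAt ℝ F p) (w : ℝ × ℝ) :
    fderiv ℝ (fun q => (F q).1) p w = (fderiv ℝ F p w).1 := by
  have : fderiv ℝ (fun q => (F q).1) p = _ := h.hasFDerivAt.fst.fderiv
  rw [this]; rfl

lemma fderiv_snd' {F : ℝ × ℝ → ℝ × ℝ} {p : ℝ × ℝ} (h : DifferentiableAt ℝ F p) (w : ℝ × ℝ) :
    fderiv ℝ (fun q => (F q).2) p w = (fderiv ℝ F p w).2 := by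
  have : fderiv ℝ (fun q => (F q).2) p = _ := h.hasFDerivAt.snd.fderiv
  rw [this]; rfl

/-- The vector field with `ξ X = 0`, `ξ y = 1`. -/
def xi (X : ℝ × ℝ → ℝ) : ℝ × ℝ → ℝ × ℝ := fun p => (-pdy X p / pdx X p, 1)

lemma SG.xi {X : ℝ × ℝ → ℝ} (hX : SG X) (h0 : _root_.pdx X 0 ≠ 0) : SG (_root_.xi X) :=
  (hX.pdy.neg.div hX.pdx h0).prodMk (SG.const 1)

lemma transfer {f η φ ψ : ℝ × ℝ → ℝ × ℝ} (hf : ContDiff ℝ (⊤ : ℕ∞) f) (hf0 : f 0 = 0)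
    (hη : IsNullVF f η) (hdet : jacDet f 0 = 0)
    (hφ : ContDiff ℝ (⊤ : ℕ∞) φ) (hψ : ContDiff ℝ (⊤ : ℕ∞) ψ) (φ0 : φ 0 = 0)
    (bφ : Function.Bijective (fderiv ℝ φ 0)) (bψ : Function.Bijective (fderiv ℝ ψ 0))
    (F : ℝ × ℝ → ℝ × ℝ) (hF : F = fun p => ψ (f (φ p)))
    (X Z : ℝ × ℝ → ℝ) (hX : X = fun p => (F p).1) (hZ : Z = fun p => (F p).2)
    (hx : pdx X 0 ≠ 0) :
    etaD (xi X) Z 0 = 0 ∧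
    (fderiv ℝ (jacDet f) 0 ≠ 0 ↔ fderiv ℝ (etaD (xi X) Z) 0 ≠ 0) ∧
    (fderiv ℝ (etaD (xi X) Z) 0 ≠ 0 → ∀ n,
      ((∀ i < n, etaIter η (i + 1) (jacDet f) 0 = 0) ↔
        ∀ i < n, etaIter (xi X) (i + 1) (etaD (xi X) Z) 0 = 0)) := by
  obtain ⟨η0, U, hU, hηU, hnull⟩ := hη
  have sη : SG η := by
    filter_upwards [eventually_mem_nhds_iff.2 hU] with p hp using hηU.contDiffAt hp
  have sf : SG f := .of_contDiff hf
  have sφ : SG φ := .of_contDiff hφ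
  have sψ : SG ψ := .of_contDiff hψ
  have cF : ContDiff ℝ (⊤ : ℕ∞) F := by rw [hF]; exact hψ.comp (hf.comp hφ)
  have sF : SG F := .of_contDiff cF
  have dF : ∀ p, DifferentiableAt ℝ F p := fun p => CDA.diff cF.contDiffAt
  have dφ : ∀ p, DifferentiableAt ℝ φ p := fun p => CDA.diff hφ.contDiffAt
  have df : ∀ p, DifferentiableAt ℝ f p := fun p => CDA.diff hf.contDiffAt
  have dψ : ∀ p, DifferentiableAt ℝ ψ p := fun p => CDA.diff hψ.contDiffAt
  have sX : SG X := by rw [hX]; exact sF.fst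
  have sZ : SG Z := by rw [hZ]; exact sF.snd
  have hT : Tendsto φ (𝓝 0) (𝓝 0) := by simpa [ContinuousAt, φ0] using sφ.cont0
  have sfφ : SG (fun p => f (φ p)) := sf.comp sφ φ0
  have fφ0 : f (φ 0) = 0 := by rw [φ0, hf0]
  have jF : ∀ p, jacDet F p = jacDet ψ (f (φ p)) * (jacDet f (φ p) * jacDet φ p) := by
    intro p
    rw [hF, jacDet_comp (g := ψ) (h := fun q => f (φ q)) (dψ _) ((df _).comp p (dφ p)),
      jacDet_comp (g := f) (df _) (dφ p)]
  set μ := etaD (xi X) Z with hμ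
  have sξ : SG (xi X) := sX.xi hx
  have sμ : SG μ := sZ.etaD sξ
  have hμF : ∀ p, pdx X p ≠ 0 → μ p = jacDet F p / pdx X p := by
    intro p hp
    have e1 : pdx X p = (fderiv ℝ F p (1, 0)).1 := by rw [hX]; exact fderiv_fst' (dF p) _
    have e2 : pdy X p = (fderiv ℝ F p (0, 1)).1 := by rw [hX]; exact fderiv_fst' (dF p) _
    have e3 : pdx Z p = (fderiv ℝ F p (1, 0)).2 := by rw [hZ]; exact fderiv_snd' (dF p) _
    have e4 : pdy Z p = (fderiv ℝ F p (0, 1)).2 := by rw [hZ]; exact fderiv_snd' (dF p) _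
    rw [hμ, etaD_eq]
    simp only [xi, jacDet, ← e1, ← e2, ← e3, ← e4]
    field_simp
    ring
  have sjψ : SG (fun p => jacDet ψ (f (φ p))) := sψ.jacDet.comp sfφ fφ0
  have sjφ : SG (jacDet φ) := sφ.jacDet
  have jφ0 : jacDet φ 0 ≠ 0 := jacDet_ne_of_inj bφ.1
  have jψ0 : jacDet ψ (f (φ 0)) ≠ 0 := by rw [fφ0]; exact jacDet_ne_of_inj bψ.1
  have hu0 : jacDet ψ (f (φ 0)) * jacDet φ 0 ≠ 0 := mul_ne_zero jψ0 jφ0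
  let u : ℝ × ℝ → ℝ := fun p => pdx X p / (jacDet ψ (f (φ p)) * jacDet φ p)
  have su : SG u := sX.pdx.div (sjψ.mul sjφ) hu0
  have u0 : u 0 ≠ 0 := div_ne_zero hx hu0
  let m : ℕ → ℝ × ℝ → ℝ := fun i p => etaIter η i (jacDet f) (φ p)
  have sm' : ∀ i, SG (etaIter η i (jacDet f)) := fun i => sf.jacDet.etaIter sη i
  have sm : ∀ i, SG (m i) := fun i => (sm' i).comp sφ φ0
  have m0 : m 0 =ᶠ[𝓝 0] fun p => u p * μ p := by
    filter_upwards [sX.pdx.cont0.eventually_ne hx, sjψ.cont0.eventually_ne jψ0,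
      sjφ.cont0.eventually_ne jφ0] with p h1 h2 h3
    rw [hμF p h1, jF]
    simp only [m, u, etaIter]
    field_simp
  have μ0 : μ 0 = 0 := by
    have := m0.self_of_nhds
    simp only [m, etaIter, φ0, hdet] at this
    exact (mul_eq_zero.1 this.symm).resolve_left u0
  let ζ : ℝ × ℝ → ℝ × ℝ := fun p =>
    ((fderiv ℝ φ p (0, 1)).2 * (η (φ p)).1 - (fderiv ℝ φ p (0, 1)).1 * (η (φ p)).2,
     (fderiv ℝ φ p (1, 0)).1 * (η (φ p)).2 - (fderiv ℝ φ p (1, 0)).2 * (η (φ p)).1)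
  have hφζ : ∀ p, fderiv ℝ φ p (ζ p) = jacDet φ p • η (φ p) := by
    intro p
    rw [clm_decomp]
    ext <;> simp [ζ, jacDet] <;> ring
  have sηφ : SG (fun p => η (φ p)) := sη.comp sφ φ0
  have sζ2 : SG (fun p => (ζ p).2) := by
    have h1 : SG (fun p => fderiv ℝ φ p (1, 0)) := sφ.fderiv_apply (SG.const _)
    exact (h1.fst.mul sηφ.snd).sub (h1.snd.mul sηφ.fst)
  have hζξ : ∀ᶠ p in 𝓝 (0 : ℝ × ℝ), μ p = 0 → ζ p = (ζ p).2 • xi X p := by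
    filter_upwards [sX.pdx.cont0.eventually_ne hx, sjψ.cont0.eventually_ne jψ0,
      sjφ.cont0.eventually_ne jφ0, hT.eventually hU] with p h1 h2 h3 h4 hp
    rw [hμF p h1, jF, div_eq_zero_iff] at hp
    have hl : jacDet f (φ p) = 0 := by
      rcases hp with hp | hp
      · rcases mul_eq_zero.1 hp with hp | hp
        · exact absurd hp h2
        · exact (mul_eq_zero.1 hp).resolve_right h3
      · exact absurd hp h1
    have hn := hnull _ h4 hl
    have hFζ : fderiv ℝ F p (ζ p) = 0 := by
      have e1 : fderiv ℝ (fun q => ψ (f (φ q))) p = _ :=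
        fderiv_comp p (dψ _) ((df (φ p)).comp p (dφ p))
      have e2 : fderiv ℝ (fun q => f (φ q)) p = _ := fderiv_comp p (df _) (dφ p)
      rw [hF, e1, ContinuousLinearMap.comp_apply, e2, ContinuousLinearMap.comp_apply, hφζ,
        map_smul, hn, smul_zero, map_zero]
    have hXζ : (ζ p).1 * pdx X p + (ζ p).2 * pdy X p = 0 := by
      have e3 : fderiv ℝ X p (ζ p) = 0 := by
        rw [hX, fderiv_fst' (dF p), hFζ]; rfl
      rw [clm_decomp] at e3
      exact e3
    ext
    · simp only [xi, Prod.smul_fst, smul_eq_mul]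
      field_simp
      linear_combination hXζ
    · simp [xi]
  have ζ20 : (ζ 0).2 ≠ 0 := by
    intro h
    have e := hζξ.self_of_nhds μ0
    rw [h, zero_smul] at e
    have e2 := hφζ 0
    rw [e, map_zero, φ0] at e2
    exact (smul_ne_zero jφ0 η0) e2.symm
  have hζm : ∀ i, etaD ζ (m i) =ᶠ[𝓝 0] fun p => jacDet φ p * m (i + 1) p := by
    intro i
    filter_upwards [hT.eventually (sm' i)] with p hp
    have e : fderiv ℝ (m i) p = _ := fderiv_comp p (CDA.diff hp) (dφ p)
    simp only [etaD, e, ContinuousLinearMap.comp_apply, hφζ, map_smul, smul_eq_mul]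
    rfl
  refine ⟨μ0, ?_, fun hdμ n => ?_⟩
  · have e1 : fderiv ℝ (m 0) 0 = (fderiv ℝ (jacDet f) 0).comp (fderiv ℝ φ 0) := by
      have : fderiv ℝ (m 0) 0 = _ :=
        fderiv_comp (0 : ℝ × ℝ) (g := jacDet f) (by rw [φ0]; exact sf.jacDet.diff0) (dφ 0)
      rw [this, φ0]
    have e2 : fderiv ℝ (m 0) 0 = u 0 • fderiv ℝ μ 0 := by
      rw [m0.fderiv_eq, fderiv_fun_mul su.diff0 sμ.diff0, μ0]; simp
    have e3 : fderiv ℝ μ 0 = 0 ↔ fderiv ℝ (m 0) 0 = 0 := by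
      rw [e2, smul_eq_zero]; simp [u0]
    rw [not_iff_not, e3, e1]
    constructor
    · intro h; rw [h]; simp
    · intro h
      refine ContinuousLinearMap.ext fun w => ?_
      obtain ⟨w, rfl⟩ := bφ.2 w
      exact congrArg (fun L => L w) h
  · have := abstract_iff sμ sξ sjφ sζ2 su sm jφ0 ζ20 u0 μ0 hdμ m0 hζm hζξ n
    simpa only [m, φ0] using this


lemma pd_symm {g : ℝ × ℝ → ℝ} (hg : SG g) : pdx (pdy g) =ᶠ[𝓝 0] pdy (pdx g) := by
  filter_upwards [hg] with p hp
  have hs : IsSymmSndFDerivAt ℝ g p := hp.isSymmSndFDerivAt (by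
    rw [minSmoothness_of_isRCLikeNormedField]
    exact WithTop.coe_le_coe.2 (le_top : (2 : ℕ∞) ≤ ⊤))
  have hd : DifferentiableAt ℝ (fderiv ℝ g) p :=
    (hp.fderiv_right (m := (⊤ : ℕ∞)) (by norm_cast)).differentiableAt (by simp)
  have key : ∀ v w, fderiv ℝ (fun q => fderiv ℝ g q w) p v = fderiv ℝ (fderiv ℝ g) p v w := by
    intro v w
    have : fderiv ℝ (fun q => fderiv ℝ g q w) p = _ :=
      (hd.hasFDerivAt.clm_apply (hasFDerivAt_const w p)).fderiv
    rw [this]; simp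
  change fderiv ℝ (fun q => fderiv ℝ g q (0, 1)) p (1, 0) =
    fderiv ℝ (fun q => fderiv ℝ g q (1, 0)) p (0, 1)
  rw [key, key]
  exact hs _ _

lemma etaD_x (v : ℝ × ℝ → ℝ × ℝ) : etaD v (fun p => p.1) = fun p => (v p).1 := by
  funext p; simp [etaD, fderiv_fst]

lemma etaD_y (v : ℝ × ℝ → ℝ × ℝ) : etaD v (fun p => p.2) = fun p => (v p).2 := by
  funext p; simp [etaD, fderiv_snd]

lemma euler (n : ℕ) : ∀ {g : ℝ × ℝ → ℝ}, Fl n g →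
    Fl (n + 1) (fun p => p.1 * pdx g p + p.2 * pdy g p - n * g p) := by
  induction n with
  | zero =>
    intro g hg
    have hg : SG g := hg
    exact Fl.one (((SG.x.mul hg.pdx).add (SG.y.mul hg.pdy)).sub ((SG.const _).mul hg)) (by simp)
  | succ n ih =>
    intro g hg
    have sg := hg.sg
    have s1 := SG.x.mul sg.pdx
    have s2 := SG.y.mul sg.pdy
    have s3 := (SG.const ((n + 1 : ℕ) : ℝ)).mul sg
    refine ⟨(s1.add s2).sub s3, by simp [hg.2.1], ?_, ?_⟩
    · refine (ih hg.2.2.1).congr ?_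
      filter_upwards [etaD_sub (fun _ => (1, 0)) (s1.add s2) s3, etaD_add (fun _ => (1, 0)) s1 s2,
        etaD_mul (fun _ => (1, 0)) SG.x sg.pdx, etaD_mul (fun _ => (1, 0)) SG.y sg.pdy,
        etaD_mul (fun _ => (1, 0)) (SG.const ((n + 1 : ℕ) : ℝ)) sg, pd_symm sg]
        with p e1 e2 e3 e4 e5 e6
      rw [e2, e3, e4, e5, etaD_x, etaD_y, etaD_const] at e1
      refine Eq.trans ?_ e1.symm
      change p.1 * pdx (pdx g) p + p.2 * pdy (pdx g) p - n * pdx g p =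
        1 * pdx g p + p.1 * pdx (pdx g) p + (0 * pdy g p + p.2 * pdx (pdy g) p) -
          (0 * g p + ((n + 1 : ℕ) : ℝ) * pdx g p)
      rw [e6]
      push_cast
      ring
    · refine (ih hg.2.2.2).congr ?_
      filter_upwards [etaD_sub (fun _ => (0, 1)) (s1.add s2) s3, etaD_add (fun _ => (0, 1)) s1 s2,
        etaD_mul (fun _ => (0, 1)) SG.x sg.pdx, etaD_mul (fun _ => (0, 1)) SG.y sg.pdy,
        etaD_mul (fun _ => (0, 1)) (SG.const ((n + 1 : ℕ) : ℝ)) sg, pd_symm sg]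
        with p e1 e2 e3 e4 e5 e6
      rw [e2, e3, e4, e5, etaD_x, etaD_y, etaD_const] at e1
      refine Eq.trans ?_ e1.symm
      change p.1 * pdx (pdy g) p + p.2 * pdy (pdy g) p - n * pdy g p =
        0 * pdx g p + p.1 * pdy (pdx g) p + (1 * pdy g p + p.2 * pdy (pdy g) p) -
          (0 * g p + ((n + 1 : ℕ) : ℝ) * pdy g p)
      rw [e6]
      push_cast
      ring

lemma dec_one {X g : ℝ × ℝ → ℝ} (hX : SG X) (X0 : X 0 = 0) (hx : pdx X 0 ≠ 0) (hg : Fl 1 g) :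
    ∃ a b : ℝ, Fl 2 (fun p => g p - (a * X p + b * p.2)) := by
  set a := pdx g 0 / pdx X 0 with ha
  set b := pdy g 0 - a * pdy X 0 with hb
  refine ⟨a, b, ?_⟩
  have sg := hg.sg
  have s1 := (SG.const a).mul hX
  have s2 := (SG.const b).mul SG.y
  have s := sg.sub (s1.add s2)
  have key : ∀ w : ℝ × ℝ, dop w (fun p => g p - (a * X p + b * p.2)) 0 =
      dop w g 0 - (a * dop w X 0 + b * w.2) := by
    intro w
    have e1 := (etaD_sub (fun _ => w) sg (s1.add s2)).self_of_nhds
    have e2 := (etaD_add (fun _ => w) s1 s2).self_of_nhds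
    have e3 := (etaD_mul (fun _ => w) (SG.const a) hX).self_of_nhds
    have e4 := (etaD_mul (fun _ => w) (SG.const b) SG.y).self_of_nhds
    beta_reduce at e1 e2 e3 e4
    rw [e2, e3, e4, etaD_const, etaD_const, etaD_y] at e1
    refine Eq.trans e1 ?_
    change dop w g 0 - (0 * X 0 + a * dop w X 0 + (0 * (0 : ℝ × ℝ).2 + b * w.2)) = _
    ring
  refine ⟨s, by simp [X0, hg.2.1], Fl.one s.pdx ?_, Fl.one s.pdy ?_⟩
  · refine (key _).trans ?_
    change pdx g 0 - (a * pdx X 0 + b * 0) = 0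
    rw [ha]; field_simp; ring
  · refine (key _).trans ?_
    change pdy g 0 - (a * pdy X 0 + b * 1) = 0
    rw [hb]; ring

lemma dec_hom {X : ℝ × ℝ → ℝ} (hX : SG X) (X0 : X 0 = 0) (hx : pdx X 0 ≠ 0) (n : ℕ) :
    ∀ {g : ℝ × ℝ → ℝ}, Fl (n + 1) g → ∃ (a b : ℝ) (H : ℝ × ℝ → ℝ), SG H ∧
      Fl (n + 2) (fun p => g p - (a * X p ^ (n + 1) + b * p.2 ^ (n + 1) + X p * (p.2 * H p))) := by
  induction n with
  | zero =>
    intro g hg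
    obtain ⟨a, b, h⟩ := dec_one hX X0 hx hg
    exact ⟨a, b, fun _ => 0, SG.const 0, by simpa using h⟩
  | succ n ih =>
    intro g hg
    obtain ⟨α, β, hx2⟩ := dec_one hX X0 hx (Fl.one SG.x rfl)
    obtain ⟨a1, b1, H1, s1, h1⟩ := ih hg.2.2.1
    obtain ⟨a2, b2, H2, s2, h2⟩ := ih hg.2.2.2
    have hE := euler _ hg
    have fx : Fl 1 (fun p : ℝ × ℝ => p.1) := Fl.one SG.x rfl
    have fy : Fl 1 (fun p : ℝ × ℝ => p.2) := Fl.one SG.y rfl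
    -- the approximant of `pdx g` is flat of order `n + 1`
    have hQ1 : Fl (n + 1) (fun p => a1 * X p ^ (n + 1) + b1 * p.2 ^ (n + 1) +
        X p * (p.2 * H1 p)) := by
      refine (hg.2.2.1.sub h1.pred).congr (Eventually.of_forall fun p => ?_)
      simp
    have t1 := fx.mul h1
    have t2 := fy.mul h2
    have t3 := hx2.mul hQ1
    have N0 : ((n + 1 + 1 : ℕ) : ℝ) ≠ 0 := by positivity
    set c : ℝ := ((n + 1 + 1 : ℕ) : ℝ)⁻¹ with hc
    have c1 : c * ((n + 1 + 1 : ℕ) : ℝ) = 1 := inv_mul_cancel₀ N0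
    refine ⟨c * (α * a1), c * (β * b1 + b2), fun p => c * (α * b1 * p.2 ^ n + α * X p * H1 p +
      β * a1 * X p ^ n + β * p.2 * H1 p + a2 * X p ^ n + p.2 * H2 p), ?_, ?_⟩
    · have := SG.x
      have := SG.y
      refine (SG.const c).mul ?_
      repeat' first
        | assumption
        | exact SG.const _
        | apply SG.add
        | apply SG.mul
        | apply SG.pow
    · have t1' : Fl (n + 1 + 2) _ := t1.mono (by omega)
      have t2' : Fl (n + 1 + 2) _ := t2.mono (by omega)
      have t3' : Fl (n + 1 + 2) _ := t3.mono (by omega)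
      have hE' : Fl (n + 1 + 2) _ := hE.mono (by omega)
      refine (Fl.mul_left (SG.const c) (((t1'.add t2').add t3').sub hE')).congr
        (Eventually.of_forall fun p => ?_)
      simp only
      linear_combination (g p) * c1

lemma dec {X : ℝ × ℝ → ℝ} (hX : SG X) (X0 : X 0 = 0) (hx : pdx X 0 ≠ 0) {g : ℝ × ℝ → ℝ}
    (hg : SG g) (n : ℕ) : ∃ (A B : Polynomial ℝ) (H : ℝ × ℝ → ℝ), SG H ∧
      Fl (n + 1) (fun p => g p - (A.eval (X p) + B.eval p.2 + X p * (p.2 * H p))) := by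
  induction n with
  | zero =>
    refine ⟨Polynomial.C (g 0), 0, fun _ => 0, SG.const 0, Fl.one ?_ (by simp)⟩
    simpa using hg.sub (SG.const (g 0))
  | succ n ih =>
    obtain ⟨A, B, H, sH, h⟩ := ih
    obtain ⟨a, b, K, sK, hK⟩ := dec_hom hX X0 hx n h
    refine ⟨A + Polynomial.C a * Polynomial.X ^ (n + 1), B + Polynomial.C b * Polynomial.X ^ (n + 1),
      fun p => H p + K p, sH.add sK, hK.congr (Eventually.of_forall fun p => ?_)⟩
    simp only [Polynomial.eval_add, Polynomial.eval_mul, Polynomial.eval_C, Polynomial.eval_pow,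
      Polynomial.eval_X]
    ring

lemma xi_X {X : ℝ × ℝ → ℝ} (hX : SG X) (hx : pdx X 0 ≠ 0) :
    etaD (xi X) X =ᶠ[𝓝 0] fun _ => 0 := by
  filter_upwards [hX.pdx.cont0.eventually_ne hx] with p hp
  rw [etaD_eq]
  simp only [xi]
  field_simp
  ring

lemma xi_step {X : ℝ × ℝ → ℝ} (hX : SG X) (hx : pdx X 0 ≠ 0) (A B : Polynomial ℝ)
    {K : ℝ × ℝ → ℝ} (hK : SG K) :
    etaD (xi X) (fun p => A.eval (X p) + B.eval p.2 + X p * K p) =ᶠ[𝓝 0]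
      fun p => B.derivative.eval p.2 + X p * etaD (xi X) K p := by
  filter_upwards [xi_X hX hx, etaD_add (xi X) ((hX.poly A).add (SG.y.poly B)) (hX.mul hK),
    etaD_add (xi X) (hX.poly A) (SG.y.poly B), etaD_poly (xi X) hX A, etaD_poly (xi X) SG.y B,
    etaD_mul (xi X) hX hK] with p e1 e2 e3 e4 e5 e6
  rw [e2, e3, e4, e5, e6, e1, etaD_y]
  simp [xi]

lemma lemM {X Z H : ℝ × ℝ → ℝ} (hX : SG X) (hx : pdx X 0 ≠ 0) (hH : SG H) (A B : Polynomial ℝ)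
    {r : ℕ} (h : Fl (r + 1) (fun p => Z p - (A.eval (X p) + B.eval p.2 + X p * (p.2 * H p))))
    (sZ : SG Z) (j : ℕ) (hj : j ≤ r) :
    ∃ K : ℝ × ℝ → ℝ, SG K ∧ (j = 0 → K 0 = H 0) ∧
      Fl (r - j) (fun p => etaIter (xi X) j (etaD (xi X) Z) p -
        ((Polynomial.derivative^[j + 1] B).eval p.2 + X p * K p)) := by
  have sξ := hX.xi hx
  induction j with
  | zero =>
    have syH := SG.y.mul hH
    refine ⟨etaD (xi X) (fun p => p.2 * H p), syH.etaD sξ, fun _ => ?_, ?_⟩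
    · have := (etaD_mul (xi X) SG.y hH).self_of_nhds
      rw [this, etaD_y]; simp [xi]
    · refine (h.etaD sξ).congr ?_
      filter_upwards [xi_step hX hx A B syH, etaD_sub (xi X) sZ
        (((hX.poly A).add (SG.y.poly B)).add (hX.mul syH))] with p e1 e2
      rw [e2, e1]; rfl
  | succ j ih =>
    obtain ⟨K, sK, _, hK⟩ := ih (by omega)
    refine ⟨etaD (xi X) K, sK.etaD sξ, by omega, ?_⟩
    have hK' : Fl (r - (j + 1) + 1) _ := hK.mono (by omega)
    refine (hK'.etaD sξ).congr ?_
    have st := xi_step hX hx 0 (Polynomial.derivative^[j + 1] B) sK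
    simp only [Polynomial.eval_zero, zero_add] at st
    filter_upwards [st, etaD_sub (xi X) ((sZ.etaD sξ).etaIter sξ j)
        ((SG.y.poly (Polynomial.derivative^[j + 1] B)).add (hX.mul sK))] with p e1 e2
    rw [e2, e1, Function.iterate_succ_apply' _ (j + 1)]; rfl

lemma lemM1 {X Z H : ℝ × ℝ → ℝ} (hX : SG X) (X0 : X 0 = 0) (hx : pdx X 0 ≠ 0) (hH : SG H)
    (A B : Polynomial ℝ)
    {r : ℕ} (h : Fl (r + 1) (fun p => Z p - (A.eval (X p) + B.eval p.2 + X p * (p.2 * H p))))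
    (sZ : SG Z) (j : ℕ) (hj : j < r) :
    etaIter (xi X) j (etaD (xi X) Z) 0 = (j + 1).factorial * B.coeff (j + 1) := by
  obtain ⟨K, sK, _, hK⟩ := lemM hX hx hH A B h sZ j hj.le
  obtain ⟨m, hm⟩ : ∃ m, r - j = m + 1 := ⟨r - j - 1, by omega⟩
  rw [hm] at hK
  have := hK.at0
  simp only [X0, zero_mul, add_zero, sub_eq_zero] at this
  rw [this]
  have e : ((0 : ℝ × ℝ).2) = 0 := rfl
  rw [e, ← Polynomial.coeff_zero_eq_eval_zero, Polynomial.coeff_iterate_derivative]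
  have := Nat.descFactorial_self (j + 1)
  rw [zero_add, this, nsmul_eq_mul]

lemma lemM2 {X Z H : ℝ × ℝ → ℝ} (hX : SG X) (X0 : X 0 = 0) (hx : pdx X 0 ≠ 0) (hH : SG H)
    (A B : Polynomial ℝ) {r : ℕ} (hr : 2 ≤ r)
    (h : Fl (r + 1) (fun p => Z p - (A.eval (X p) + B.eval p.2 + X p * (p.2 * H p))))
    (sZ : SG Z) (hB : B.coeff 2 = 0) :
    fderiv ℝ (etaD (xi X) Z) 0 ≠ 0 ↔ H 0 ≠ 0 := by
  obtain ⟨K, sK, K0, hK⟩ := lemM hX hx hH A B h sZ 0 (by omega)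
  have sμ := sZ.etaD (hX.xi hx)
  have hK2 : Fl 2 _ := hK.mono (by omega : 2 ≤ r - 0)
  have hcoef : (Polynomial.derivative (Polynomial.derivative B)).eval 0 = 0 := by
    rw [← Polynomial.coeff_zero_eq_eval_zero, Polynomial.coeff_derivative,
      Polynomial.coeff_derivative, hB]; simp
  have key : ∀ w : ℝ × ℝ, fderiv ℝ (etaD (xi X) Z) 0 w = H 0 * fderiv ℝ X 0 w := by
    intro w
    have e0 := (hK2.etaD (SG.const w)).at0
    have sB := SG.y.poly (Polynomial.derivative^[0 + 1] B)
    have e1 := (etaD_sub (fun _ => w) sμ (sB.add (hX.mul sK))).self_of_nhds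
    have e2 := (etaD_add (fun _ => w) sB (hX.mul sK)).self_of_nhds
    have e3 := (etaD_poly (fun _ => w) SG.y (Polynomial.derivative^[0 + 1] B)).self_of_nhds
    have e4 := (etaD_mul (fun _ => w) hX sK).self_of_nhds
    have e5 := e1.symm.trans e0
    beta_reduce at e2 e3 e4 e5
    rw [e2, e3, e4, X0, K0 rfl] at e5
    have e : ((0 : ℝ × ℝ).2) = 0 := rfl
    simp only [zero_add, Function.iterate_one, e, hcoef, zero_mul, add_zero] at e5
    change fderiv ℝ (etaD (xi X) Z) 0 w - fderiv ℝ X 0 w * H 0 = 0 at e5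
    linear_combination e5
  constructor
  · intro hne h0
    exact hne (ContinuousLinearMap.ext fun w => by rw [key, h0]; simp)
  · intro h0 hz
    have := key (1, 0)
    rw [hz] at this
    exact mul_ne_zero h0 hx this.symm


lemma exists_ext {g : ℝ × ℝ → ℝ × ℝ} (hg : SG g) :
    ∃ G : ℝ × ℝ → ℝ × ℝ, ContDiff ℝ (⊤ : ℕ∞) G ∧ G =ᶠ[𝓝 0] g := by
  obtain ⟨ε, ε0, hε⟩ := Metric.eventually_nhds_iff.1 hg
  let b : ContDiffBump (0 : ℝ × ℝ) := ⟨ε / 4, ε / 2, by positivity, by linarith⟩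
  refine ⟨fun p => b p • g p, ?_, ?_⟩
  · rw [contDiff_iff_contDiffAt]
    intro p
    by_cases hp : dist p 0 < ε
    · exact b.contDiffAt.smul (hε hp)
    · have hz : (fun p => b p • g p) =ᶠ[𝓝 p] fun _ => 0 := by
        have ho : ∀ᶠ q in 𝓝 p, ε / 2 < dist q 0 :=
          (continuous_id.dist continuous_const).continuousAt.eventually_const_lt
            (by simp only [id]; linarith)
        filter_upwards [ho] with q hq
        rw [b.zero_of_le_dist hq.le, zero_smul]
      exact contDiffAt_const.congr_of_eventuallyEq hz
  · filter_upwards [b.eventuallyEq_one] with p hp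
    simp [hp]

lemma exists_inv {Φ : ℝ × ℝ → ℝ × ℝ} (hΦ : SG Φ) (Φ0 : Φ 0 = 0) (hj : jacDet Φ 0 ≠ 0) :
    ∃ φ : ℝ × ℝ → ℝ × ℝ, ContDiff ℝ (⊤ : ℕ∞) φ ∧ φ 0 = 0 ∧ jacDet φ 0 ≠ 0 ∧
      ∀ᶠ p in 𝓝 0, Φ (φ p) = p := by
  have eqv : ∀ q, jacDet Φ q ≠ 0 → DifferentiableAt ℝ Φ q → ∃ L : (ℝ × ℝ) ≃L[ℝ] (ℝ × ℝ),
      HasFDerivAt Φ (L : (ℝ × ℝ) →L[ℝ] (ℝ × ℝ)) q := by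
    intro q hq hd
    have hb := bij_of_jacDet_ne hq
    refine ⟨ContinuousLinearEquiv.ofBijective (fderiv ℝ Φ q)
      (LinearMap.ker_eq_bot.2 hb.1) (LinearMap.range_eq_top.2 hb.2), ?_⟩
    rw [ContinuousLinearEquiv.coe_ofBijective]
    exact hd.hasFDerivAt
  obtain ⟨L, hL⟩ := eqv 0 hj hΦ.diff0
  have htop : ((⊤ : ℕ∞) : WithTop ℕ∞) ≠ 0 := by simp
  let e := hΦ.at0.toOpenPartialHomeomorph Φ hL htop
  have hs : (0 : ℝ × ℝ) ∈ e.source := hΦ.at0.mem_toOpenPartialHomeomorph_source hL htop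
  have he : ∀ p, e p = Φ p := fun p => rfl
  have ht : (0 : ℝ × ℝ) ∈ e.target := by
    have := e.map_source hs
    rwa [he, Φ0] at this
  have es0 : e.symm 0 = 0 := by
    have := e.left_inv hs
    rwa [he, Φ0] at this
  have hTs : Tendsto e.symm (𝓝 0) (𝓝 0) := by
    have := (e.continuousAt_symm ht).tendsto
    rwa [es0] at this
  have htn : ∀ᶠ p in 𝓝 (0 : ℝ × ℝ), p ∈ e.target := e.open_target.mem_nhds ht
  have sg : SG (e.symm : ℝ × ℝ → ℝ × ℝ) := by
    filter_upwards [htn, hTs.eventually hΦ,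
      hTs.eventually (hΦ.jacDet.cont0.eventually_ne hj)] with p h1 h2 h3
    obtain ⟨L', hL'⟩ := eqv _ h3 (CDA.diff h2)
    exact e.contDiffAt_symm h1 hL' h2
  obtain ⟨φ, hφ, hφe⟩ := exists_ext sg
  have φ0 : φ 0 = 0 := hφe.self_of_nhds.trans es0
  have hinv : ∀ᶠ p in 𝓝 0, Φ (φ p) = p := by
    filter_upwards [hφe, htn] with p h1 h2
    rw [h1, ← he, e.right_inv h2]
  refine ⟨φ, hφ, φ0, ?_, hinv⟩
  have h1 : jacDet (fun q => Φ (φ q)) 0 = jacDet Φ (φ 0) * jacDet φ 0 :=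
    jacDet_comp (by rw [φ0]; exact hΦ.diff0) (SG.of_contDiff hφ).diff0
  have h2 : jacDet (fun q => Φ (φ q)) 0 = 1 := by
    have : (fun q => Φ (φ q)) =ᶠ[𝓝 0] fun q => q := hinv
    simp [jacDet, this.fderiv_eq]
  intro h0
  rw [h0, mul_zero, h2] at h1
  exact one_ne_zero h1

lemma corank_det {f : ℝ × ℝ → ℝ × ℝ} (h : CorankOne f) : jacDet f 0 = 0 := by
  by_contra hne
  have hb := bij_of_jacDet_ne hne
  have hr : LinearMap.range ((fderiv ℝ f 0).toLinearMap) = ⊤ := LinearMap.range_eq_top.2 hb.2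
  unfold CorankOne at h
  rw [LinearMap.rank, hr, rank_top] at h
  have h2 : Module.rank ℝ (ℝ × ℝ) = 2 := by
    rw [← Module.finrank_eq_rank]; simp
  rw [h2] at h
  norm_num at h

lemma corank_ne {f : ℝ × ℝ → ℝ × ℝ} (h : CorankOne f) : fderiv ℝ f 0 ≠ 0 := by
  intro h0
  unfold CorankOne at h
  rw [h0] at h
  simp [LinearMap.rank_zero] at h

lemma jac_pair {u v : ℝ × ℝ → ℝ} {p : ℝ × ℝ} (hu : DifferentiableAt ℝ u p)
    (hv : DifferentiableAt ℝ v p) :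
    jacDet (fun q => (u q, v q)) p = pdx u p * pdy v p - pdx v p * pdy u p := by
  have e : fderiv ℝ (fun q => (u q, v q)) p = _ := (hu.hasFDerivAt.prodMk hv.hasFDerivAt).fderiv
  simp only [jacDet, e]
  rfl

lemma exists_swaps {f : ℝ × ℝ → ℝ × ℝ} (hf : ContDiff ℝ (⊤ : ℕ∞) f)
    (h : fderiv ℝ f 0 ≠ 0) :
    ∃ φ ψ : ℝ × ℝ → ℝ × ℝ, ContDiff ℝ (⊤ : ℕ∞) φ ∧ ContDiff ℝ (⊤ : ℕ∞) ψ ∧ φ 0 = 0 ∧ ψ 0 = 0 ∧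
      jacDet φ 0 ≠ 0 ∧ jacDet ψ 0 ≠ 0 ∧ pdx (fun p => (ψ (f (φ p))).1) 0 ≠ 0 := by
  have sf := SG.of_contDiff hf
  have hid : ContDiff ℝ (⊤ : ℕ∞) (fun p : ℝ × ℝ => p) := contDiff_id
  have hsw : ContDiff ℝ (⊤ : ℕ∞) (fun p : ℝ × ℝ => (p.2, p.1)) := contDiff_snd.prodMk contDiff_fst
  have jid : jacDet (fun p : ℝ × ℝ => p) 0 ≠ 0 := by simp [jacDet]
  have fsw : fderiv ℝ (fun p : ℝ × ℝ => (p.2, p.1)) 0 =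
      (ContinuousLinearMap.snd ℝ ℝ ℝ).prod (ContinuousLinearMap.fst ℝ ℝ ℝ) :=
    (hasFDerivAt_snd.prodMk hasFDerivAt_fst).fderiv
  have jsw : jacDet (fun p : ℝ × ℝ => (p.2, p.1)) 0 ≠ 0 := by
    simp [jacDet, fsw]
  have c1 : fderiv ℝ (fun p : ℝ × ℝ => f (p.2, p.1)) 0 (1, 0) = fderiv ℝ f 0 (0, 1) := by
    have : fderiv ℝ (fun p : ℝ × ℝ => f (p.2, p.1)) 0 = _ :=
      fderiv_comp (g := f) (f := fun p : ℝ × ℝ => (p.2, p.1)) (0 : ℝ × ℝ) sf.diff0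
        (SG.of_contDiff hsw).diff0
    rw [this, ContinuousLinearMap.comp_apply, fsw]
    simp
    rfl
  have dsw : DifferentiableAt ℝ (fun p : ℝ × ℝ => f (p.2, p.1)) 0 :=
    (SG.of_contDiff (hf.comp hsw)).diff0
  by_cases h1 : (fderiv ℝ f 0 (1, 0)).1 = 0
  · by_cases h2 : (fderiv ℝ f 0 (1, 0)).2 = 0
    · by_cases h3 : (fderiv ℝ f 0 (0, 1)).1 = 0
      · by_cases h4 : (fderiv ℝ f 0 (0, 1)).2 = 0
        · refine absurd (ContinuousLinearMap.ext fun w => ?_) h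
          have : w = w.1 • ((1 : ℝ), (0 : ℝ)) + w.2 • ((0 : ℝ), (1 : ℝ)) := by ext <;> simp
          rw [this, map_add, map_smul, map_smul, show fderiv ℝ f 0 (1, 0) = 0 from Prod.ext h1 h2,
            show fderiv ℝ f 0 (0, 1) = 0 from Prod.ext h3 h4]
          simp
        · refine ⟨_, _, hsw, hsw, rfl, rfl, jsw, jsw, ?_⟩
          change fderiv ℝ (fun p : ℝ × ℝ => (f (p.2, p.1)).2) 0 (1, 0) ≠ 0
          rwa [fderiv_snd' dsw, c1]
      · refine ⟨_, _, hsw, hid, rfl, rfl, jsw, jid, ?_⟩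
        change fderiv ℝ (fun p : ℝ × ℝ => (f (p.2, p.1)).1) 0 (1, 0) ≠ 0
        rwa [fderiv_fst' dsw, c1]
    · refine ⟨_, _, hid, hsw, rfl, rfl, jid, jsw, ?_⟩
      change fderiv ℝ (fun p : ℝ × ℝ => (f p).2) 0 (1, 0) ≠ 0
      rwa [fderiv_snd' sf.diff0]
  · refine ⟨_, _, hid, hid, rfl, rfl, jid, jid, ?_⟩
    change fderiv ℝ (fun p : ℝ × ℝ => (f p).1) 0 (1, 0) ≠ 0
    rwa [fderiv_fst' sf.diff0]

lemma cond_iff (e : ℕ → ℝ) {r : ℕ} (hr : 5 ≤ r) :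
    ((∀ i, 1 ≤ i → i ≤ r - 2 → e i = 0) ∧ e (r - 1) ≠ 0) ↔
      ((∀ i < r - 2, e (i + 1) = 0) ∧ ¬ ∀ i < r - 1, e (i + 1) = 0) := by
  constructor
  · rintro ⟨h1, h2⟩
    refine ⟨fun i hi => h1 _ (by omega) (by omega), fun h => h2 ?_⟩
    have := h (r - 2) (by omega)
    rwa [show r - 2 + 1 = r - 1 by omega] at this
  · rintro ⟨h1, h2⟩
    refine ⟨fun i hi hi' => ?_, fun h => h2 fun i hi => ?_⟩
    · have := h1 (i - 1) (by omega)
      rwa [show i - 1 + 1 = i by omega] at this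
    · by_cases hlt : i < r - 2
      · exact h1 i hlt
      · rwa [show i + 1 = r - 1 by omega]

lemma cond_coeff {f η : ℝ × ℝ → ℝ × ℝ} {X Z H : ℝ × ℝ → ℝ} (hX : SG X) (X0 : X 0 = 0)
    (hx : pdx X 0 ≠ 0) (hH : SG H) (sZ : SG Z) (A B : Polynomial ℝ) {r : ℕ} (hr : 5 ≤ r)
    (h : Fl (r + 1) (fun p => Z p - (A.eval (X p) + B.eval p.2 + X p * (p.2 * H p))))
    (t1 : fderiv ℝ (jacDet f) 0 ≠ 0 ↔ fderiv ℝ (etaD (xi X) Z) 0 ≠ 0)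
    (t2 : fderiv ℝ (etaD (xi X) Z) 0 ≠ 0 → ∀ n,
      ((∀ i < n, etaIter η (i + 1) (jacDet f) 0 = 0) ↔
        ∀ i < n, etaIter (xi X) (i + 1) (etaD (xi X) Z) 0 = 0)) :
    (fderiv ℝ (jacDet f) 0 ≠ 0 ∧
          (∀ i, 1 ≤ i → i ≤ r - 2 → etaIter η i (jacDet f) 0 = 0) ∧
          etaIter η (r - 1) (jacDet f) 0 ≠ 0) ↔
      (H 0 ≠ 0 ∧ (∀ k, 2 ≤ k → k < r → B.coeff k = 0) ∧ B.coeff r ≠ 0) := by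
  have hc : ∀ n, n ≤ r - 1 → ((∀ i < n, etaIter (xi X) (i + 1) (etaD (xi X) Z) 0 = 0) ↔
      ∀ i < n, B.coeff (i + 2) = 0) := by
    intro n hn
    refine forall₂_congr fun i hi => ?_
    rw [lemM1 hX X0 hx hH A B h sZ (i + 1) (by omega), mul_eq_zero]
    simp [Nat.factorial_ne_zero]
  have hcond := cond_iff (fun i => etaIter η i (jacDet f) 0) hr
  rw [hcond, t1]
  have hco : ((∀ i < r - 2, B.coeff (i + 2) = 0) ∧ ¬ ∀ i < r - 1, B.coeff (i + 2) = 0) ↔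
      ((∀ k, 2 ≤ k → k < r → B.coeff k = 0) ∧ B.coeff r ≠ 0) := by
    constructor
    · rintro ⟨h1, h2⟩
      refine ⟨fun k hk hk' => ?_, fun h => h2 fun i hi => ?_⟩
      · have := h1 (k - 2) (by omega)
        rwa [show k - 2 + 2 = k by omega] at this
      · by_cases hlt : i < r - 2
        · exact h1 i hlt
        · rwa [show i + 2 = r by omega]
    · rintro ⟨h1, h2⟩
      refine ⟨fun i hi => h1 _ (by omega) (by omega), fun h => h2 ?_⟩
      have := h (r - 2) (by omega)
      rwa [show r - 2 + 2 = r by omega] at this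
  constructor
  · rintro ⟨hP, hQ⟩
    rw [t2 hP, t2 hP, hc _ (by omega), hc _ le_rfl, hco] at hQ
    exact ⟨(lemM2 hX X0 hx hH A B (by omega) h sZ (hQ.1 2 le_rfl (by omega))).1 hP, hQ⟩
  · rintro ⟨hP, hQ⟩
    have hP' := (lemM2 hX X0 hx hH A B (by omega) h sZ (hQ.1 2 le_rfl (by omega))).2 hP
    refine ⟨hP', ?_⟩
    rw [t2 hP', t2 hP', hc _ (by omega), hc _ le_rfl, hco]
    exact hQ

lemma normal_form {X Z H : ℝ × ℝ → ℝ} (hX : ContDiff ℝ (⊤ : ℕ∞) X) (hZ : ContDiff ℝ (⊤ : ℕ∞) Z)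
    (X0 : X 0 = 0) (Z0 : Z 0 = 0)
    (hx : pdx X 0 ≠ 0) (hH : SG H) (A B : Polynomial ℝ) {r : ℕ} (hr : 5 ≤ r)
    (h : Fl (r + 1) (fun p => Z p - (A.eval (X p) + B.eval p.2 + X p * (p.2 * H p))))
    (H0 : H 0 ≠ 0) (hB : ∀ k, 1 ≤ k → k < r → B.coeff k = 0) (hBr : B.coeff r ≠ 0) :
    ∃ φ Ψ : ℝ × ℝ → ℝ × ℝ, ContDiff ℝ (⊤ : ℕ∞) φ ∧ ContDiff ℝ (⊤ : ℕ∞) Ψ ∧ φ 0 = 0 ∧ Ψ 0 = 0 ∧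
      jacDet φ 0 ≠ 0 ∧ jacDet Ψ 0 ≠ 0 ∧
      Fl (r + 1) (fun p => (Ψ (X (φ p), Z (φ p))).1 - p.1) ∧
      Fl (r + 1) (fun p => (Ψ (X (φ p), Z (φ p))).2 - (p.1 * p.2 + p.2 ^ r)) := by
  have sX := SG.of_contDiff hX
  have sZ := SG.of_contDiff hZ
  have e2 : ((0 : ℝ × ℝ).2) = 0 := rfl
  have e1 : ((0 : ℝ × ℝ).1) = 0 := rfl
  set b0 := B.coeff 0 with hb0
  obtain ⟨D, hD⟩ : Polynomial.X ^ r ∣ B - Polynomial.C b0 := by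
    rw [Polynomial.X_pow_dvd_iff]
    intro d hd
    rcases Nat.eq_zero_or_pos d with rfl | hd0
    · simp [hb0]
    · rw [Polynomial.coeff_sub, hB d hd0 hd, Polynomial.coeff_C, if_neg (by omega), sub_zero]
  have hBe : ∀ y, B.eval y = b0 + y ^ r * D.eval y := by
    intro y
    have := congrArg (Polynomial.eval y) hD
    simp only [Polynomial.eval_sub, Polynomial.eval_C, Polynomial.eval_mul, Polynomial.eval_pow,
      Polynomial.eval_X] at this
    linear_combination this
  have hD0 : D.eval 0 = B.coeff r := by
    have := congrArg (fun P => Polynomial.coeff P r) hD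
    simp only [Polynomial.coeff_sub, Polynomial.coeff_C, if_neg (by omega : ¬ r = 0), sub_zero] at this
    rw [this, ← Polynomial.coeff_zero_eq_eval_zero]
    simpa using (Polynomial.coeff_X_pow_mul D r 0).symm
  set c := B.coeff r with hc
  set t := H 0 ^ r / c with ht
  have t0 : t ≠ 0 := div_ne_zero (pow_ne_zero _ H0) hBr
  have htc : t * c = H 0 ^ r := div_mul_cancel₀ _ hBr
  have A0 : A.eval 0 + b0 = 0 := by
    have := h.at0
    simp only [Z0, X0, e2, hBe, zero_mul, add_zero, zero_pow (by omega : r ≠ 0)] at this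
    linarith
  -- the target change of coordinates
  have sA : ContDiff ℝ (⊤ : ℕ∞) (fun p : ℝ × ℝ => A.eval p.1) := by
    have hA : ContDiff ℝ (⊤ : ℕ∞) (fun x : ℝ => A.eval x) := by
      simpa using A.contDiff_aeval (𝕜 := ℝ) (⊤ : ℕ∞)
    exact hA.comp contDiff_fst
  have cu : ContDiff ℝ (⊤ : ℕ∞) (fun p : ℝ × ℝ => t * p.1) := contDiff_const.mul contDiff_fst
  have cv : ContDiff ℝ (⊤ : ℕ∞) (fun p : ℝ × ℝ => t * (p.2 - A.eval p.1 - b0)) :=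
    contDiff_const.mul ((contDiff_snd.sub sA).sub contDiff_const)
  have jΨ : jacDet (fun p : ℝ × ℝ => (t * p.1, t * (p.2 - A.eval p.1 - b0))) 0 ≠ 0 := by
    rw [jac_pair (SG.of_contDiff cu).diff0 (SG.of_contDiff cv).diff0]
    have u1 : ∀ w, fderiv ℝ (fun p : ℝ × ℝ => t * p.1) 0 w = t * w.1 := by
      intro w
      have : fderiv ℝ (fun p : ℝ × ℝ => t * p.1) 0 = _ :=
        (hasFDerivAt_fst.const_mul t).fderiv
      rw [this]; simp
    have v1 : fderiv ℝ (fun p : ℝ × ℝ => t * (p.2 - A.eval p.1 - b0)) 0 (0, 1) = t := by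
      have hA : HasFDerivAt (fun p : ℝ × ℝ => A.eval p.1) _ 0 :=
        (A.hasDerivAt ((0 : ℝ × ℝ).1)).comp_hasFDerivAt (0 : ℝ × ℝ)
          (hasFDerivAt_fst (𝕜 := ℝ) (E := ℝ) (F := ℝ) (p := (0 : ℝ × ℝ)))
      have : fderiv ℝ (fun p : ℝ × ℝ => t * (p.2 - A.eval p.1 - b0)) 0 = _ :=
        (((hasFDerivAt_snd.sub hA).sub_const b0).const_mul t).fderiv
      rw [this]; simp
    change fderiv ℝ (fun p : ℝ × ℝ => t * p.1) 0 (1, 0) *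
      fderiv ℝ (fun p : ℝ × ℝ => t * (p.2 - A.eval p.1 - b0)) 0 (0, 1) -
      fderiv ℝ (fun p : ℝ × ℝ => t * (p.2 - A.eval p.1 - b0)) 0 (1, 0) *
      fderiv ℝ (fun p : ℝ × ℝ => t * p.1) 0 (0, 1) ≠ 0
    rw [u1, u1, v1]
    simpa using t0
  -- the source change of coordinates
  have stX := (SG.const t).mul sX
  have syH := SG.y.mul hH
  have jΦ : jacDet (fun p => (t * X p, p.2 * H p)) 0 ≠ 0 := by
    rw [jac_pair stX.diff0 syH.diff0]
    have u1 : ∀ w : ℝ × ℝ, etaD (fun _ => w) (fun p => t * X p) 0 = t * etaD (fun _ => w) X 0 := by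
      intro w
      have := (etaD_mul (fun _ => w) (SG.const t) sX).self_of_nhds
      beta_reduce at this
      rw [this, etaD_const, zero_mul, zero_add]
    have v1 : ∀ w : ℝ × ℝ, etaD (fun _ => w) (fun p : ℝ × ℝ => p.2 * H p) 0 = w.2 * H 0 := by
      intro w
      have := (etaD_mul (fun _ => w) SG.y hH).self_of_nhds
      beta_reduce at this
      rw [this, etaD_y, e2, zero_mul, add_zero]
    change etaD (fun _ => ((1 : ℝ), (0 : ℝ))) (fun p => t * X p) 0 *
      etaD (fun _ => ((0 : ℝ), (1 : ℝ))) (fun p : ℝ × ℝ => p.2 * H p) 0 -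
      etaD (fun _ => ((1 : ℝ), (0 : ℝ))) (fun p : ℝ × ℝ => p.2 * H p) 0 *
      etaD (fun _ => ((0 : ℝ), (1 : ℝ))) (fun p => t * X p) 0 ≠ 0
    rw [u1, u1, v1, v1]
    have hx' : etaD (fun _ => ((1 : ℝ), (0 : ℝ))) X 0 ≠ 0 := hx
    simp [t0, H0, hx']
  obtain ⟨φ, hφ, φ0, jφ, hinv⟩ := exists_inv (stX.prodMk syH)
    (Prod.ext (by simp [X0]) (by simp)) jΦ
  have sφ := SG.of_contDiff hφ
  refine ⟨φ, _, hφ, cu.prodMk cv, φ0, Prod.ext (by simp) ?_, jφ, jΨ, ?_, ?_⟩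
  · simp only [e1, e2]
    linear_combination -t * A0
  · refine (Fl.zero _).congr ?_
    filter_upwards [hinv] with p hp
    have h1 := congrArg Prod.fst hp
    simp only at h1 ⊢
    rw [h1, sub_self]
  · have fl2 : Fl (r + 1) (fun p : ℝ × ℝ => p.2 ^ r * (t * D.eval p.2 - H p ^ r)) := by
      have f1 : Fl r (fun p : ℝ × ℝ => p.2 ^ r) := by
        simpa using (Fl.one SG.y rfl).pow r
      exact f1.mul (Fl.one (((SG.const t).mul (SG.y.poly D)).sub (hH.pow r))
        (by simp only [e2, hD0, htc, sub_self]))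
    have fl := (Fl.mul_left (SG.const t) h).add fl2
    refine (Fl.comp sφ φ0 fl).congr ?_
    filter_upwards [hinv] with p hp
    have h1 := congrArg Prod.fst hp
    have h2 := congrArg Prod.snd hp
    simp only at h1 h2 ⊢
    have h3 : p.1 * p.2 + p.2 ^ r =
        t * X (φ p) * ((φ p).2 * H (φ p)) + ((φ p).2 * H (φ p)) ^ r := by rw [h1, h2]
    rw [h3, hBe, mul_pow]
    ring

theorem stmt1 (f η : ℝ × ℝ → ℝ × ℝ)
    (hf : ContDiff ℝ (⊤ : ℕ∞) f) (hf0 : f 0 = 0) (hcr : CorankOne f)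
    (hη : IsNullVF f η) :
    ∀ r : ℕ, 5 ≤ r →
      (JetEquiv r f (fun p => (p.1, p.1 * p.2 + p.2 ^ r)) ↔
        (fderiv ℝ (jacDet f) 0 ≠ 0 ∧
          (∀ i, 1 ≤ i → i ≤ r - 2 → etaIter η i (jacDet f) 0 = 0) ∧
          etaIter η (r - 1) (jacDet f) 0 ≠ 0)) := by
  intro r hr
  have hdet := corank_det hcr
  have hG : ContDiff ℝ (⊤ : ℕ∞) (fun p : ℝ × ℝ => (p.1, p.1 * p.2 + p.2 ^ r)) :=
    contDiff_fst.prodMk ((contDiff_fst.mul contDiff_snd).add (contDiff_snd.pow r))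
  constructor
  · rintro ⟨φ, ψ, hφ, hψ, φ0, ψ0, bφ, bψ, hjet⟩
    have hF : ContDiff ℝ (⊤ : ℕ∞) (fun p => ψ (f (φ p))) := hψ.comp (hf.comp hφ)
    have hj := (jet_iff (r := r) hF hG).1 hjet
    have sX : SG (fun p => (ψ (f (φ p))).1) := SG.of_contDiff hF.fst
    have sZ : SG (fun p => (ψ (f (φ p))).2) := SG.of_contDiff hF.snd
    have X0 : (ψ (f (φ 0))).1 = 0 := by rw [φ0, hf0, ψ0]; rfl
    have hx1 : pdx (fun p => (ψ (f (φ p))).1) 0 = 1 := by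
      have h1 : Fl 2 _ := hj.1.mono (by omega)
      have h2 := (h1.etaD (SG.const ((1 : ℝ), (0 : ℝ)))).at0
      have h3 := (etaD_sub (fun _ => ((1 : ℝ), (0 : ℝ))) sX SG.x).self_of_nhds
      have h4 := h3.symm.trans h2
      beta_reduce at h4
      rw [etaD_x, sub_eq_zero] at h4
      exact h4
    have hx : pdx (fun p => (ψ (f (φ p))).1) 0 ≠ 0 := by rw [hx1]; exact one_ne_zero
    obtain ⟨-, t1, t2⟩ := transfer hf hf0 hη hdet hφ hψ φ0 bφ bψ _ rfl _ _ rfl rfl hx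
    have hfl : Fl (r + 1) (fun p => (ψ (f (φ p))).2 - (Polynomial.eval ((ψ (f (φ p))).1) 0 +
        Polynomial.eval p.2 (Polynomial.X ^ r) + (ψ (f (φ p))).1 * (p.2 * 1))) := by
      refine (hj.2.sub (hj.1.mul_right SG.y)).congr (Eventually.of_forall fun p => ?_)
      simp only [Polynomial.eval_zero, Polynomial.eval_pow, Polynomial.eval_X]
      ring
    refine (cond_coeff sX X0 hx (SG.const 1) sZ 0 (Polynomial.X ^ r) hr hfl t1 t2).2
      ⟨one_ne_zero, fun k _ hk => ?_, ?_⟩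
    · rw [Polynomial.coeff_X_pow, if_neg (by omega)]
    · rw [Polynomial.coeff_X_pow_self]; exact one_ne_zero
  · intro hcond
    obtain ⟨φ, ψ, hφ, hψ, φ0, ψ0, jφ, jψ, hx⟩ := exists_swaps hf (corank_ne hcr)
    have hF : ContDiff ℝ (⊤ : ℕ∞) (fun p => ψ (f (φ p))) := hψ.comp (hf.comp hφ)
    have sX : SG (fun p => (ψ (f (φ p))).1) := SG.of_contDiff hF.fst
    have sZ : SG (fun p => (ψ (f (φ p))).2) := SG.of_contDiff hF.snd
    have X0 : (ψ (f (φ 0))).1 = 0 := by rw [φ0, hf0, ψ0]; rfl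
    have Z0 : (ψ (f (φ 0))).2 = 0 := by rw [φ0, hf0, ψ0]; rfl
    obtain ⟨t0, t1, t2⟩ := transfer hf hf0 hη hdet hφ hψ φ0 (bij_of_jacDet_ne jφ)
      (bij_of_jacDet_ne jψ) _ rfl _ _ rfl rfl hx
    obtain ⟨A, B, H, sH, hfl⟩ := dec sX X0 hx sZ r
    obtain ⟨H0, hB, hBr⟩ := (cond_coeff sX X0 hx sH sZ A B hr hfl t1 t2).1 hcond
    have hB1 : B.coeff 1 = 0 := by
      have := lemM1 sX X0 hx sH A B hfl sZ 0 (by omega)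
      have h2 := this.symm.trans t0
      simpa using h2
    obtain ⟨φ', Ψ, hφ', hΨ, φ'0, Ψ0, jφ', jΨ, f1, f2⟩ :=
      normal_form hF.fst hF.snd X0 Z0 hx sH A B hr hfl H0
        (fun k hk hk' => by
          rcases Nat.eq_or_lt_of_le hk with rfl | h2
          · exact hB1
          · exact hB k h2 hk') hBr
    refine ⟨fun p => φ (φ' p), fun p => Ψ (ψ p), hφ.comp hφ', hΨ.comp hψ, ?_, ?_, ?_, ?_, ?_⟩
    · simp only [φ'0, φ0]
    · simp only [ψ0, Ψ0]
    · refine bij_of_jacDet_ne ?_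
      rw [jacDet_comp (hφ.differentiable (by simp) _) (hφ'.differentiable (by simp) _), φ'0]
      exact mul_ne_zero jφ jφ'
    · refine bij_of_jacDet_ne ?_
      rw [jacDet_comp (hΨ.differentiable (by simp) _) (hψ.differentiable (by simp) _), ψ0]
      exact mul_ne_zero jΨ jψ
    · exact (jet_iff (r := r) ((hΨ.comp hψ).comp (hf.comp (hφ.comp hφ'))) hG).2 ⟨f1, f2⟩
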